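/- arXiv:2108.10502 — 3 statements merged into one kernel-verified Lean document; each statement's English description precedes it below -/
import Mathlib

section
/- Convex envelope of the sum of an integrally convex and a separable convex function: if f: ℤⁿ → ℝ ∪ {+∞} is integrally convex and Φ: ℤⁿ → ℝ ∪ {+∞} is separable convex (Φ(x) = Σᵢ φᵢ(xᵢ) with univariate discrete convex φᵢ), then the convex envelope of f + Φ equals the sum of the convex envelopes: (f + Φ)‾ = f‾ + Φ‾ as functions ℝⁿ → ℝ ∪ {+∞}. -/
open scoped BigOperators

/-- The integral neighborhood N(u) = {z ∈ ℤⁿ : |uᵢ − zᵢ| < 1 for all i}. -/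
def intNbhd {n : ℕ} (u : Fin n → ℝ) : Set (Fin n → ℤ) :=
  {z | ∀ i, |u i - (z i : ℝ)| < 1}

/-- The local convex extension f̃(u): the infimum of convex combinations
Σ λ_z f(z) over points z of the integral neighborhood N(u) whose convex
combination with the weights λ equals u.  (It is +∞ when no such
combination exists.) -/
noncomputable def localConvexExt {n : ℕ} (f : (Fin n → ℤ) → EReal)
    (u : Fin n → ℝ) : EReal :=
  sInf { v : EReal | ∃ (t : Finset (Fin n → ℤ)) (lam : (Fin n → ℤ) → ℝ),
    (∀ z ∈ t, z ∈ intNbhd u) ∧ (∀ z ∈ t, 0 ≤ lam z) ∧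
    (∑ z ∈ t, lam z) = 1 ∧
    (∀ i, (∑ z ∈ t, lam z * (z i : ℝ)) = u i) ∧
    v = ∑ z ∈ t, (((lam z : ℝ) : EReal) * f z) }

/-- A function f : ℤⁿ → ℝ ∪ {+∞} with nonempty effective domain is
*integrally convex* if its local convex extension satisfies the midpoint
inequality f̃((x+y)/2) ≤ (f(x)+f(y))/2 for all x, y ∈ ℤⁿ with
‖x − y‖∞ ≥ 2 (this is equivalent to convexity of f̃ on ℝⁿ). -/
def IntegrallyConvexFn {n : ℕ} (f : (Fin n → ℤ) → EReal) : Prop :=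
  (∃ x, f x ≠ ⊤) ∧
  ∀ x y : Fin n → ℤ, (∃ i, 2 ≤ |x i - y i|) →
    localConvexExt f (fun i => ((x i + y i : ℤ) : ℝ) / 2) ≤ (f x + f y) / 2

/-- F : ℝⁿ → ℝ ∪ {+∞} (EReal-valued, never ⊥) is a convex function. -/
def ConvexEFn {n : ℕ} (F : (Fin n → ℝ) → EReal) : Prop :=
  (∀ u, F u ≠ ⊥) ∧
  ∀ (u v : Fin n → ℝ) (a b : ℝ), 0 ≤ a → 0 ≤ b → a + b = 1 →
    F (a • u + b • v) ≤ ((a : ℝ) : EReal) * F u + ((b : ℝ) : EReal) * F v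

/-- The convex envelope of g : ℤⁿ → ℝ ∪ {+∞}: the (pointwise) largest convex
function ℝⁿ → ℝ ∪ {+∞} minorizing g on ℤⁿ. -/
noncomputable def convEnvelope {n : ℕ} (g : (Fin n → ℤ) → EReal) :
    (Fin n → ℝ) → EReal :=
  fun u => ⨆ (F : (Fin n → ℝ) → EReal)
    (_ : ConvexEFn F ∧ ∀ z : Fin n → ℤ, F (fun i => (z i : ℝ)) ≤ g z), F u

/-! ### Finite sums of extended reals -/

lemma EReal.coe_finset_sum {ι : Type*} (s : Finset ι) (a : ι → ℝ) :
    ((∑ i ∈ s, a i : ℝ) : EReal) = ∑ i ∈ s, (a i : EReal) := by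
  classical
  induction s using Finset.induction_on with
  | empty => simp
  | insert i s hi ih => rw [Finset.sum_insert hi, Finset.sum_insert hi, EReal.coe_add, ih]

lemma EReal.finset_sum_ne_bot {ι : Type*} {s : Finset ι} {a : ι → EReal}
    (h : ∀ i ∈ s, a i ≠ ⊥) : ∑ i ∈ s, a i ≠ ⊥ := by
  classical
  induction s using Finset.induction_on with
  | empty => simp
  | insert i s hi ih =>
    rw [Finset.sum_insert hi, EReal.add_ne_bot_iff]
    exact ⟨h i (by simp), ih fun j hj => h j (by simp [hj])⟩

lemma EReal.ne_top_of_finset_sum_ne_top {ι : Type*} {s : Finset ι} {a : ι → EReal}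
    (h : ∀ i ∈ s, a i ≠ ⊥) (hs : ∑ i ∈ s, a i ≠ ⊤) {i : ι} (hi : i ∈ s) : a i ≠ ⊤ := by
  classical
  rw [← Finset.add_sum_erase s a hi, EReal.add_ne_top_iff_ne_top₂ (h i hi)
    (EReal.finset_sum_ne_bot fun j hj => h j (Finset.mem_of_mem_erase hj))] at hs
  exact hs.1

lemma EReal.finset_sum_eq_coe_toReal {ι : Type*} {s : Finset ι} {a : ι → EReal}
    (h : ∀ i ∈ s, a i ≠ ⊥) (h' : ∀ i ∈ s, a i ≠ ⊤) :
    ∑ i ∈ s, a i = ((∑ i ∈ s, (a i).toReal : ℝ) : EReal) := by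
  rw [EReal.coe_finset_sum]
  exact Finset.sum_congr rfl fun i hi => (EReal.coe_toReal (h' i hi) (h i hi)).symm

/-! ### Convex combinations of integer points -/

/-- The weights `w`, supported on the finite set `S` of integer points, express `u` as a convex
combination of points of `S`. -/
structure IsConvComb {n : ℕ} (S : Finset (Fin n → ℤ)) (w : (Fin n → ℤ) → ℝ)
    (u : Fin n → ℝ) : Prop where
  nonneg : ∀ z, 0 ≤ w z
  eq_zero : ∀ z, z ∉ S → w z = 0
  sum_eq_one : ∑ z ∈ S, w z = 1
  sum_mul : ∀ i, ∑ z ∈ S, w z * (z i : ℝ) = u i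

namespace IsConvComb

variable {n : ℕ} {S : Finset (Fin n → ℤ)} {w : (Fin n → ℤ) → ℝ} {u : Fin n → ℝ}

lemma sum_mul_subset (h : IsConvComb S w u) {T : Finset (Fin n → ℤ)} (hST : S ⊆ T)
    (g : (Fin n → ℤ) → ℝ) : ∑ z ∈ T, w z * g z = ∑ z ∈ S, w z * g z :=
  (Finset.sum_subset hST fun z _ hz => by rw [h.eq_zero z hz, zero_mul]).symm

lemma mono (h : IsConvComb S w u) {T : Finset (Fin n → ℤ)} (hST : S ⊆ T) :
    IsConvComb T w u where
  nonneg := h.nonneg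
  eq_zero z hz := h.eq_zero z fun hS => hz (hST hS)
  sum_eq_one := by simpa [h.sum_eq_one] using h.sum_mul_subset hST fun _ => 1
  sum_mul i := by rw [h.sum_mul_subset hST fun z => (z i : ℝ), h.sum_mul]

lemma sum_affine (h : IsConvComb S w u) (c : ℝ) (s : Fin n → ℝ) :
    ∑ z ∈ S, w z * (c + ∑ i, s i * (z i : ℝ)) = c + ∑ i, s i * u i := by
  simp_rw [mul_add, Finset.sum_add_distrib, Finset.mul_sum]
  rw [← Finset.sum_mul, h.sum_eq_one, one_mul, Finset.sum_comm]
  congr 1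
  refine Finset.sum_congr rfl fun i _ => ?_
  rw [← h.sum_mul i, Finset.mul_sum]
  exact Finset.sum_congr rfl fun z _ => by ring

lemma combine {S' : Finset (Fin n → ℤ)} {w' : (Fin n → ℤ) → ℝ} {v : Fin n → ℝ}
    [DecidableEq (Fin n → ℤ)] (h : IsConvComb S w u) (h' : IsConvComb S' w' v) {a b : ℝ}
    (ha : 0 ≤ a) (hb : 0 ≤ b) (hab : a + b = 1) :
    IsConvComb (S ∪ S') (fun z => a * w z + b * w' z) (a • u + b • v) := by
  have h1 := h.mono (Finset.subset_union_left (s₂ := S'))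
  have h2 := h'.mono (Finset.subset_union_right (s₁ := S))
  refine ⟨fun z => ?_, fun z hz => ?_, ?_, fun i => ?_⟩
  · have := h.nonneg z
    have := h'.nonneg z
    positivity
  · rw [h1.eq_zero z hz, h2.eq_zero z hz]
    simp
  · rw [Finset.sum_add_distrib, ← Finset.mul_sum, ← Finset.mul_sum, h1.sum_eq_one,
      h2.sum_eq_one]
    linarith
  · simp only [add_mul, mul_assoc, Finset.sum_add_distrib, ← Finset.mul_sum, h1.sum_mul,
      h2.sum_mul, Pi.add_apply, Pi.smul_apply, smul_eq_mul]

lemma sum_combine {S' : Finset (Fin n → ℤ)} {w' : (Fin n → ℤ) → ℝ} {v : Fin n → ℝ}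
    [DecidableEq (Fin n → ℤ)] (h : IsConvComb S w u) (h' : IsConvComb S' w' v) (a b : ℝ)
    (g : (Fin n → ℤ) → ℝ) :
    ∑ z ∈ S ∪ S', (a * w z + b * w' z) * g z =
      a * ∑ z ∈ S, w z * g z + b * ∑ z ∈ S', w' z * g z := by
  rw [← h.sum_mul_subset (Finset.subset_union_left (s₂ := S')),
    ← h'.sum_mul_subset (Finset.subset_union_right (s₁ := S))]
  simp only [add_mul, mul_assoc, Finset.sum_add_distrib, ← Finset.mul_sum]

/-- Some point of the support lies weakly below the barycenter in the given coordinate. -/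
lemma exists_le (h : IsConvComb S w u) (i : Fin n) : ∃ z ∈ S, (z i : ℝ) ≤ u i := by
  by_contra! hlt
  have h0 : ∑ z ∈ S, w z * ((z i : ℝ) - u i) = 0 := by
    simp only [mul_sub, Finset.sum_sub_distrib, ← Finset.sum_mul, h.sum_mul, h.sum_eq_one]
    ring
  rw [Finset.sum_eq_zero_iff_of_nonneg fun z hz =>
    mul_nonneg (h.nonneg z) (sub_nonneg.2 (hlt z hz).le)] at h0
  have : ∑ z ∈ S, w z = 0 := Finset.sum_eq_zero fun z hz =>
    (mul_eq_zero.1 (h0 z hz)).resolve_right (sub_pos.2 (hlt z hz)).ne'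
  linarith [h.sum_eq_one]

/-- Some point of the support lies weakly above the barycenter in the given coordinate. -/
lemma exists_ge (h : IsConvComb S w u) (i : Fin n) : ∃ z ∈ S, u i ≤ (z i : ℝ) := by
  by_contra! hlt
  have h0 : ∑ z ∈ S, w z * (u i - (z i : ℝ)) = 0 := by
    simp only [mul_sub, Finset.sum_sub_distrib, ← Finset.sum_mul, h.sum_mul, h.sum_eq_one]
    ring
  rw [Finset.sum_eq_zero_iff_of_nonneg fun z hz =>
    mul_nonneg (h.nonneg z) (sub_nonneg.2 (hlt z hz).le)] at h0
  have : ∑ z ∈ S, w z = 0 := Finset.sum_eq_zero fun z hz =>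
    (mul_eq_zero.1 (h0 z hz)).resolve_right (sub_pos.2 (hlt z hz)).ne'
  linarith [h.sum_eq_one]

/-- If any two points of positive weight are at `ℓ∞`-distance at most one, then these points
belong to the integral neighborhood of the barycenter. -/
lemma mem_intNbhd (h : IsConvComb S w u)
    (hclose : ∀ x ∈ S, ∀ y ∈ S, 0 < w x → 0 < w y → ∀ i, |x i - y i| ≤ 1)
    {x : Fin n → ℤ} (hx : x ∈ S) (hwx : 0 < w x) : x ∈ intNbhd u := by
  classical
  intro i
  have h1 : u i - (x i : ℝ) = ∑ z ∈ S, w z * ((z i : ℝ) - x i) := by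
    simp only [mul_sub, Finset.sum_sub_distrib, ← Finset.sum_mul, h.sum_mul, h.sum_eq_one]
    ring
  have h2 : |u i - (x i : ℝ)| ≤ ∑ z ∈ S.erase x, w z := by
    rw [h1, ← Finset.add_sum_erase S _ hx, sub_self, mul_zero, zero_add]
    refine (Finset.abs_sum_le_sum_abs _ _).trans (Finset.sum_le_sum fun z hz => ?_)
    rw [abs_mul, abs_of_nonneg (h.nonneg z)]
    rcases (h.nonneg z).eq_or_lt with h0 | h0
    · simp [← h0]
    · have hc := hclose z (Finset.mem_of_mem_erase hz) x hx h0 hwx i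
      have hc' : |(z i : ℝ) - x i| ≤ 1 := by exact_mod_cast hc
      nlinarith
  have h3 := Finset.add_sum_erase S w hx
  rw [h.sum_eq_one] at h3
  linarith

end IsConvComb

/-- The set of weights on `S` with barycenter `u` is compact. -/
lemma isCompact_setOf_isConvComb {n : ℕ} (S : Finset (Fin n → ℤ)) (u : Fin n → ℝ) :
    IsCompact {w | IsConvComb S w u} := by
  have hK : IsCompact (Set.univ.pi fun _ : Fin n → ℤ => Set.Icc (0 : ℝ) 1) :=
    isCompact_univ_pi fun _ => isCompact_Icc
  refine hK.of_isClosed_subset ?_ ?_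
  · have : {w | IsConvComb S w u} = {w | ∀ z, 0 ≤ w z} ∩ {w | ∀ z, z ∉ S → w z = 0} ∩
        {w | ∑ z ∈ S, w z = 1} ∩ {w | ∀ i, ∑ z ∈ S, w z * (z i : ℝ) = u i} := by
      ext w
      exact ⟨fun h => ⟨⟨⟨h.1, h.2⟩, h.3⟩, h.4⟩, fun h => ⟨h.1.1.1, h.1.1.2, h.1.2, h.2⟩⟩
    rw [this]
    refine ((IsClosed.inter ?_ ?_).inter ?_).inter ?_
    · simp only [Set.ofPred_forall]
      exact isClosed_iInter fun z => isClosed_le continuous_const (continuous_apply z)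
    · simp only [Set.ofPred_forall]
      exact isClosed_iInter fun z => isClosed_iInter fun _ =>
        isClosed_eq (continuous_apply z) continuous_const
    · exact isClosed_eq (by fun_prop) continuous_const
    · simp only [Set.ofPred_forall]
      exact isClosed_iInter fun i => isClosed_eq (by fun_prop) continuous_const
  · intro w hw z _
    refine ⟨hw.nonneg z, ?_⟩
    by_cases hz : z ∈ S
    · rw [← hw.sum_eq_one]
      exact Finset.single_le_sum (fun y _ => hw.nonneg y) hz
    · rw [hw.eq_zero z hz]
      exact zero_le_one

/-! ### The local convex extension in terms of real weights -/

section LocalExtension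

variable {n : ℕ} {f : (Fin n → ℤ) → EReal} {u : Fin n → ℝ}

lemma localConvexExt_le_of_isConvComb (hnb : ∀ x, f x ≠ ⊥) {S : Finset (Fin n → ℤ)}
    {w : (Fin n → ℤ) → ℝ} (h : IsConvComb S w u) (hS : ∀ z ∈ S, f z ≠ ⊤)
    (hloc : ∀ z ∈ S, 0 < w z → z ∈ intNbhd u) :
    localConvexExt f u ≤ ((∑ z ∈ S, w z * (f z).toReal : ℝ) : EReal) := by
  classical
  have hfilter (g : (Fin n → ℤ) → ℝ) :
      ∑ z ∈ S.filter (fun z => 0 < w z), w z * g z = ∑ z ∈ S, w z * g z := by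
    refine Finset.sum_subset (Finset.filter_subset _ _) fun z hz hz' => ?_
    have : ¬ 0 < w z := fun h0 => hz' (Finset.mem_filter.2 ⟨hz, h0⟩)
    rw [le_antisymm (not_lt.1 this) (h.nonneg z), zero_mul]
  refine sInf_le ⟨S.filter (fun z => 0 < w z), w, ?_, fun z _ => h.nonneg z, ?_, ?_, ?_⟩
  · intro z hz
    rw [Finset.mem_filter] at hz
    exact hloc z hz.1 hz.2
  · simpa [h.sum_eq_one] using hfilter fun _ => 1
  · exact fun i => by rw [hfilter fun z => (z i : ℝ), h.sum_mul]
  · rw [← hfilter, EReal.coe_finset_sum]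
    refine Finset.sum_congr rfl fun z hz => ?_
    rw [EReal.coe_mul, EReal.coe_toReal (hS z (Finset.mem_filter.1 hz).1) (hnb z)]

lemma exists_isConvComb_of_localConvexExt_lt (hnb : ∀ x, f x ≠ ⊥) {c : ℝ}
    (hc : localConvexExt f u < c) :
    ∃ S w, IsConvComb S w u ∧ (∀ z ∈ S, z ∈ intNbhd u) ∧ (∀ z ∈ S, f z ≠ ⊤) ∧
      ∑ z ∈ S, w z * (f z).toReal < c := by
  classical
  obtain ⟨_, ⟨t, lam, hN, h0, h1, hu, rfl⟩, hlt⟩ := sInf_lt_iff.1 hc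
  have hterm : ∀ z ∈ t, (lam z : EReal) * f z ≠ ⊥ := by
    intro z hz
    rw [EReal.mul_ne_bot]
    have := h0 z hz
    refine ⟨by simp, Or.inr (hnb z), by simp, Or.inl (by exact_mod_cast this)⟩
  have hterm' : ∀ z ∈ t, (lam z : EReal) * f z ≠ ⊤ := fun z hz =>
    EReal.ne_top_of_finset_sum_ne_top hterm (hlt.trans (EReal.coe_lt_top c)).ne hz
  have hfin : ∀ z ∈ t, lam z ≠ 0 → f z ≠ ⊤ := by
    intro z hz hne htop
    apply hterm' z hz
    rw [htop, EReal.coe_mul_top_of_pos (lt_of_le_of_ne (h0 z hz) (Ne.symm hne))]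
  set S := t.filter (fun z => lam z ≠ 0) with hSdef
  have hS : ∀ z ∈ S, z ∈ t ∧ lam z ≠ 0 := fun z hz => Finset.mem_filter.1 hz
  have hsum (g : (Fin n → ℤ) → ℝ) :
      ∑ z ∈ S, (if z ∈ S then lam z else 0) * g z = ∑ z ∈ t, lam z * g z := by
    rw [Finset.sum_congr rfl fun z hz => by rw [if_pos hz]]
    refine Finset.sum_subset (Finset.filter_subset _ _) fun z hz hz' => ?_
    by_contra hne
    exact hz' (Finset.mem_filter.2 ⟨hz, left_ne_zero_of_mul hne⟩)
  refine ⟨S, fun z => if z ∈ S then lam z else 0, ⟨fun z => ?_, fun z hz => if_neg hz, ?_,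
    fun i => ?_⟩, fun z hz => hN z (hS z hz).1, fun z hz => hfin z (hS z hz).1 (hS z hz).2, ?_⟩
  · show 0 ≤ if z ∈ S then lam z else 0
    split_ifs with hz
    · exact h0 z (hS z hz).1
    · exact le_rfl
  · simpa [h1] using hsum fun _ => 1
  · rw [hsum fun z => (z i : ℝ), hu]
  · rw [hsum]
    rw [EReal.finset_sum_eq_coe_toReal hterm hterm', EReal.coe_lt_coe_iff] at hlt
    simpa [EReal.toReal_mul] using hlt

lemma localConvexExt_coe_le (f : (Fin n → ℤ) → EReal) (z : Fin n → ℤ) :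
    localConvexExt f (fun i => (z i : ℝ)) ≤ f z := by
  refine sInf_le ⟨{z}, fun _ => 1, ?_, ?_, ?_, ?_, ?_⟩ <;> simp [intNbhd]

lemma intNbhd_finite (u : Fin n → ℝ) : (intNbhd u).Finite := by
  refine (Set.finite_Icc (fun i => ⌊u i⌋) (fun i => ⌈u i⌉)).subset fun z hz => ⟨?_, ?_⟩
  · intro i
    have := abs_lt.1 (hz i)
    exact Int.lt_add_one_iff.1 (Int.floor_lt.2 (by push_cast; linarith))
  · intro i
    have := abs_lt.1 (hz i)
    exact Int.sub_one_lt_iff.1 (Int.lt_ceil.2 (by push_cast; linarith))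

lemma localConvexExt_ne_bot (hnb : ∀ x, f x ≠ ⊥) (u : Fin n → ℝ) : localConvexExt f u ≠ ⊥ := by
  intro hbot
  obtain ⟨m, hm⟩ := ((intNbhd_finite u).image fun z => (f z).toReal).bddBelow
  obtain ⟨S, w, h, hN, -, hlt⟩ :=
    exists_isConvComb_of_localConvexExt_lt hnb (u := u) (c := m) (hbot ▸ EReal.bot_lt_coe m)
  refine hlt.not_ge ?_
  calc m = ∑ z ∈ S, w z * m := by rw [← Finset.sum_mul, h.sum_eq_one, one_mul]
    _ ≤ _ := Finset.sum_le_sum fun z hz =>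
      mul_le_mul_of_nonneg_left (hm ⟨z, hN z hz, rfl⟩) (h.nonneg z)

end LocalExtension

/-! ### Midpoint convexity implies convexity of the local convex extension -/

/-- The midpoint inequality of integral convexity. -/
def LocalMidpointConvex {n : ℕ} (f : (Fin n → ℤ) → EReal) : Prop :=
  ∀ x y : Fin n → ℤ, (∃ i, 2 ≤ |x i - y i|) →
    localConvexExt f (fun i => ((x i + y i : ℤ) : ℝ) / 2) ≤ (f x + f y) / 2

section Midpoint

variable {n : ℕ} {f : (Fin n → ℤ) → EReal}

/-- An integer within distance less than one of the midpoint of two integers is at least as close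
to the midpoint as these are, and strictly closer if they are at distance at least two. -/
lemma Int.sq_le_of_abs_midpoint_sub_lt_one {x y z : ℤ} (h : |((x + y : ℤ) : ℝ) / 2 - z| < 1) :
    (2 * z - (x + y)) ^ 2 ≤ (x - y) ^ 2 ∧
      (2 ≤ |x - y| → (2 * z - (x + y)) ^ 2 + 3 ≤ (x - y) ^ 2) := by
  have h' := abs_lt.1 h
  push_cast at h'
  have h1 : 2 * z - (x + y) < 2 := by
    have : (2 * z - (x + y) : ℝ) < 2 := by linarith
    exact_mod_cast this
  have h2 : -2 < 2 * z - (x + y) := by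
    have : (-2 : ℝ) < 2 * z - (x + y) := by linarith
    exact_mod_cast this
  have hsq : 2 ≤ |x - y| → 4 ≤ (x - y) ^ 2 := fun h => by
    rw [← sq_abs]
    nlinarith
  obtain h0 | h0 | h0 : 2 * z - (x + y) = 0 ∨ 2 * z - (x + y) = 1 ∨ 2 * z - (x + y) = -1 := by
    omega
  · rw [h0]
    exact ⟨by positivity, fun h => by linarith [hsq h]⟩
  all_goals
    rw [h0]
    have : x - y ≠ 0 := by omega
    have : 0 < (x - y) ^ 2 := by positivity
    exact ⟨by linarith, fun h => by linarith [hsq h]⟩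

lemma IsConvComb.sum_mul_sum_sq_le {T : Finset (Fin n → ℤ)} {w : (Fin n → ℤ) → ℝ}
    {x y : Fin n → ℤ} (h : IsConvComb T w fun i => ((x i + y i : ℤ) : ℝ) / 2)
    (hT : ∀ z ∈ T, z ∈ intNbhd fun i => ((x i + y i : ℤ) : ℝ) / 2)
    (hxy : ∃ i, 2 ≤ |x i - y i|) :
    ∑ z ∈ T, w z * ∑ i, (z i : ℝ) ^ 2 ≤
      (∑ i, (x i : ℝ) ^ 2 + ∑ i, (y i : ℝ) ^ 2) / 2 - 3 / 4 := by
  classical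
  obtain ⟨k, hk⟩ := hxy
  have hpt : ∀ z ∈ T, ∑ i, (z i : ℝ) ^ 2 ≤
      (∑ i, (-(x i * y i : ℝ)) - 3 / 4) + ∑ i, (x i + y i : ℝ) * z i := by
    intro z hz
    have hi : ∀ i ∈ Finset.univ, (z i : ℝ) ^ 2 + (if i = k then 3 / 4 else 0) ≤
        -(x i * y i : ℝ) + (x i + y i : ℝ) * z i := by
      intro i _
      obtain ⟨h1, h2⟩ := Int.sq_le_of_abs_midpoint_sub_lt_one (hT z hz i)
      split_ifs with hik
      · subst hik
        have h3 : (2 * z i - (x i + y i) : ℝ) ^ 2 + 3 ≤ (x i - y i) ^ 2 := by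
          exact_mod_cast h2 hk
        nlinarith
      · have h3 : (2 * z i - (x i + y i) : ℝ) ^ 2 ≤ (x i - y i) ^ 2 := by exact_mod_cast h1
        nlinarith
    have := Finset.sum_le_sum hi
    rw [Finset.sum_add_distrib, Finset.sum_add_distrib, Finset.sum_ite_eq' Finset.univ k,
      if_pos (Finset.mem_univ k)] at this
    linarith
  calc ∑ z ∈ T, w z * ∑ i, (z i : ℝ) ^ 2
      ≤ ∑ z ∈ T, w z * ((∑ i, (-(x i * y i : ℝ)) - 3 / 4) + ∑ i, (x i + y i : ℝ) * z i) :=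
        Finset.sum_le_sum fun z hz => mul_le_mul_of_nonneg_left (hpt z hz) (h.nonneg z)
    _ = ∑ i, (-(x i * y i : ℝ)) - 3 / 4 + ∑ i, (x i + y i : ℝ) * (((x i + y i : ℤ) : ℝ) / 2) :=
        h.sum_affine _ _
    _ = (∑ i, (x i : ℝ) ^ 2 + ∑ i, (y i : ℝ) ^ 2) / 2 - 3 / 4 := by
        have : ∑ i, (-(x i * y i : ℝ)) + ∑ i, (x i + y i : ℝ) * (((x i + y i : ℤ) : ℝ) / 2) =
            (∑ i, (x i : ℝ) ^ 2 + ∑ i, (y i : ℝ) ^ 2) / 2 := by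
          rw [← Finset.sum_add_distrib, ← Finset.sum_add_distrib, Finset.sum_div]
          refine Finset.sum_congr rfl fun i _ => ?_
          push_cast
          ring
        linarith

lemma LocalMidpointConvex.exists_cheaper (hmid : LocalMidpointConvex f) (hnb : ∀ x, f x ≠ ⊥)
    {x y : Fin n → ℤ} (hx : f x ≠ ⊤) (hy : f y ≠ ⊤) (hxy : ∃ i, 2 ≤ |x i - y i|)
    {η : ℝ} (hη : 0 < η) :
    ∃ T w, IsConvComb T w (fun i => ((x i + y i : ℤ) : ℝ) / 2) ∧
      (∀ z ∈ T, z ∈ intNbhd fun i => ((x i + y i : ℤ) : ℝ) / 2) ∧ (∀ z ∈ T, f z ≠ ⊤) ∧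
      2 * ∑ z ∈ T, w z * ((f z).toReal + η * ∑ i, (z i : ℝ) ^ 2) <
        ((f x).toReal + η * ∑ i, (x i : ℝ) ^ 2) + ((f y).toReal + η * ∑ i, (y i : ℝ) ^ 2) := by
  have hle := hmid x y hxy
  have hval : (f x + f y) / 2 = ((((f x).toReal + (f y).toReal) / 2 : ℝ) : EReal) := by
    rw [EReal.coe_div, EReal.coe_add, EReal.coe_toReal hx (hnb x), EReal.coe_toReal hy (hnb y)]
    rfl
  rw [hval] at hle
  have hlt : localConvexExt f (fun i => ((x i + y i : ℤ) : ℝ) / 2) <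
      ((((f x).toReal + (f y).toReal) / 2 + η * (3 / 4) : ℝ) : EReal) :=
    hle.trans_lt (EReal.coe_lt_coe_iff.2 (by linarith))
  obtain ⟨T, w, h, hN, hfin, hcost⟩ := exists_isConvComb_of_localConvexExt_lt hnb hlt
  refine ⟨T, w, h, hN, hfin, ?_⟩
  have hsq := mul_le_mul_of_nonneg_left (h.sum_mul_sum_sq_le hN hxy) hη.le
  have hsplit : ∑ z ∈ T, w z * ((f z).toReal + η * ∑ i, (z i : ℝ) ^ 2) =
      ∑ z ∈ T, w z * (f z).toReal + η * ∑ z ∈ T, w z * ∑ i, (z i : ℝ) ^ 2 := by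
    rw [Finset.mul_sum, ← Finset.sum_add_distrib]
    exact Finset.sum_congr rfl fun z _ => by ring
  rw [hsplit]
  linarith

/-- Moving mass from two points to a convex combination representing their midpoint. -/
lemma IsConvComb.exchange [DecidableEq (Fin n → ℤ)] {S T : Finset (Fin n → ℤ)}
    {w l : (Fin n → ℤ) → ℝ} {u : Fin n → ℝ}
    {x y : Fin n → ℤ} (h : IsConvComb S w u) (hx : x ∈ S) (hy : y ∈ S) (hxy : x ≠ y)
    (hl : IsConvComb T l fun i => ((x i + y i : ℤ) : ℝ) / 2) (hT : T ⊆ S) {δ : ℝ} (hδ : 0 ≤ δ)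
    (hδx : δ ≤ w x) (hδy : δ ≤ w y) :
    IsConvComb S (fun z => w z + δ * (2 * l z - (if z = x then 1 else 0) -
      (if z = y then 1 else 0))) u ∧
    ∀ g : (Fin n → ℤ) → ℝ, ∑ z ∈ S, (w z + δ * (2 * l z - (if z = x then 1 else 0) -
      (if z = y then 1 else 0))) * g z =
        ∑ z ∈ S, w z * g z + δ * (2 * ∑ z ∈ T, l z * g z - g x - g y) := by
  have hsum : ∀ g : (Fin n → ℤ) → ℝ, ∑ z ∈ S, (w z + δ * (2 * l z - (if z = x then 1 else 0) -
      (if z = y then 1 else 0))) * g z =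
        ∑ z ∈ S, w z * g z + δ * (2 * ∑ z ∈ T, l z * g z - g x - g y) := by
    intro g
    have hgx : ∑ z ∈ S, (if z = x then (1 : ℝ) else 0) * g z = g x := by simp [hx]
    have hgy : ∑ z ∈ S, (if z = y then (1 : ℝ) else 0) * g z = g y := by simp [hy]
    rw [← hl.sum_mul_subset hT, ← hgx, ← hgy, Finset.mul_sum, ← Finset.sum_sub_distrib,
      ← Finset.sum_sub_distrib, Finset.mul_sum, ← Finset.sum_add_distrib]
    exact Finset.sum_congr rfl fun z _ => by ring
  refine ⟨⟨fun z => ?_, fun z hz => ?_, ?_, fun i => ?_⟩, hsum⟩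
  · have h1 := h.nonneg z
    have h2 := mul_nonneg hδ (hl.nonneg z)
    by_cases hzx : z = x
    · subst hzx
      simp only [if_true, if_neg hxy]
      linarith
    · by_cases hzy : z = y
      · subst hzy
        simp only [if_true, if_neg hzx]
        linarith
      · simp only [if_neg hzx, if_neg hzy]
        linarith
  · have hzx : z ≠ x := fun e => hz (e ▸ hx)
    have hzy : z ≠ y := fun e => hz (e ▸ hy)
    simp [h.eq_zero z hz, hl.eq_zero z fun hz' => hz (hT hz'), hzx, hzy]
  · have := hsum fun _ => 1
    simp only [mul_one, h.sum_eq_one, hl.sum_eq_one] at this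
    rw [this]
    ring
  · rw [hsum fun z => (z i : ℝ), h.sum_mul, hl.sum_mul]
    push_cast
    ring

/-- The local convex extension lies below every convex combination of values, local or not. -/
lemma LocalMidpointConvex.localConvexExt_le (hmid : LocalMidpointConvex f)
    (hnb : ∀ x, f x ≠ ⊥) {S : Finset (Fin n → ℤ)} {w : (Fin n → ℤ) → ℝ} {u : Fin n → ℝ}
    (h : IsConvComb S w u) (hS : ∀ z ∈ S, f z ≠ ⊤) :
    localConvexExt f u ≤ ((∑ z ∈ S, w z * (f z).toReal : ℝ) : EReal) := by
  classical
  obtain ⟨a, ha⟩ := S.bddBelow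
  obtain ⟨b, hb⟩ := S.bddAbove
  set B := (Finset.Icc a b).filter (fun z => f z ≠ ⊤) with hB
  have hmemB : ∀ z, z ∈ B ↔ (a ≤ z ∧ z ≤ b) ∧ f z ≠ ⊤ := fun z => by
    rw [hB, Finset.mem_filter, Finset.mem_Icc]
  have hSB : S ⊆ B := fun z hz => (hmemB z).2 ⟨⟨ha hz, hb hz⟩, hS z hz⟩
  have hwB := h.mono hSB
  have key : ∀ η : ℝ, 0 < η → localConvexExt f u ≤
      ((∑ z ∈ B, w z * ((f z).toReal + η * ∑ i, (z i : ℝ) ^ 2) : ℝ) : EReal) := by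
    intro η hη
    obtain ⟨m, hm, hmin⟩ := (isCompact_setOf_isConvComb B u).exists_isMinOn ⟨w, hwB⟩
      (f := fun m => ∑ z ∈ B, m z * ((f z).toReal + η * ∑ i, (z i : ℝ) ^ 2))
      (by fun_prop)
    have hm' : IsConvComb B m u := hm
    have hclose : ∀ x ∈ B, ∀ y ∈ B, 0 < m x → 0 < m y → ∀ i, |x i - y i| ≤ 1 := by
      intro x hx y hy hmx hmy i
      by_contra! hi
      obtain ⟨T, l, hl, hTN, hTf, hcost⟩ := hmid.exists_cheaper hnb ((hmemB x).1 hx).2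
        ((hmemB y).1 hy).2 ⟨i, hi⟩ hη
      have hTB : T ⊆ B := by
        intro z hz
        have hz' := fun j => abs_lt.1 (hTN z hz j)
        refine (hmemB z).2 ⟨⟨fun j => ?_, fun j => ?_⟩, hTf z hz⟩
        · have h1 : a j ≤ x j := ((hmemB x).1 hx).1.1 j
          have h2 : a j ≤ y j := ((hmemB y).1 hy).1.1 j
          have h3 : (x j + y j : ℤ) < 2 * z j + 2 := by
            have := (hz' j).2
            have : ((x j + y j : ℤ) : ℝ) < 2 * z j + 2 := by linarith
            exact_mod_cast this
          change a j ≤ z j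
          omega
        · have h1 : x j ≤ b j := ((hmemB x).1 hx).1.2 j
          have h2 : y j ≤ b j := ((hmemB y).1 hy).1.2 j
          have h3 : 2 * z j < (x j + y j : ℤ) + 2 := by
            have := (hz' j).1
            have : (2 * z j : ℝ) < ((x j + y j : ℤ) : ℝ) + 2 := by linarith
            exact_mod_cast this
          change z j ≤ b j
          omega
      have hne : x ≠ y := by
        rintro rfl
        simp at hi
      have hδ : 0 < min (m x) (m y) := lt_min hmx hmy
      obtain ⟨hc, hsum⟩ := hm'.exchange hx hy hne hl hTB hδ.le (min_le_left _ _)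
        (min_le_right _ _)
      have := hmin hc
      simp only [Set.mem_ofPred_eq, hsum] at this
      nlinarith
    refine (localConvexExt_le_of_isConvComb hnb hm' (fun z hz => ((hmemB z).1 hz).2)
      fun z hz hmz => hm'.mem_intNbhd hclose hz hmz).trans (EReal.coe_le_coe_iff.2 ?_)
    refine le_trans (Finset.sum_le_sum fun z _ => mul_le_mul_of_nonneg_left ?_ (hm'.nonneg z))
      (hmin hwB)
    have : 0 ≤ η * ∑ i, (z i : ℝ) ^ 2 := by positivity
    linarith
  rw [← h.sum_mul_subset hSB]
  refine EReal.le_of_forall_lt_iff_le.1 fun c hc => ?_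
  rw [EReal.coe_lt_coe_iff] at hc
  set Q := ∑ z ∈ B, w z * ∑ i, (z i : ℝ) ^ 2 with hQ
  have hQ0 : 0 ≤ Q := Finset.sum_nonneg fun z _ => mul_nonneg (h.nonneg z) (by positivity)
  set C := ∑ z ∈ B, w z * (f z).toReal with hC
  have hη : 0 < (c - C) / (Q + 1) := div_pos (by linarith) (by linarith)
  refine (key _ hη).trans (EReal.coe_le_coe_iff.2 ?_)
  have hsplit : ∑ z ∈ B, w z * ((f z).toReal + (c - C) / (Q + 1) * ∑ i, (z i : ℝ) ^ 2) =
      C + (c - C) / (Q + 1) * Q := by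
    rw [hC, hQ, Finset.mul_sum, ← Finset.sum_add_distrib]
    exact Finset.sum_congr rfl fun z _ => by ring
  rw [hsplit]
  have : (c - C) / (Q + 1) * (Q + 1) = c - C := div_mul_cancel₀ _ (by linarith)
  linarith

lemma LocalMidpointConvex.convexEFn (hmid : LocalMidpointConvex f) (hnb : ∀ x, f x ≠ ⊥) :
    ConvexEFn (localConvexExt f) := by
  classical
  refine ⟨localConvexExt_ne_bot hnb, fun u v a b ha hb hab => ?_⟩
  rcases ha.eq_or_lt with rfl | ha'
  · obtain rfl : b = 1 := by linarith
    simp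
  rcases hb.eq_or_lt with rfl | hb'
  · obtain rfl : a = 1 := by linarith
    simp
  have hnb' : ∀ (c : ℝ) v, 0 ≤ c → (c : EReal) * localConvexExt f v ≠ ⊥ := by
    intro c v hc
    rw [EReal.mul_ne_bot]
    exact ⟨by simp, Or.inr (localConvexExt_ne_bot hnb v), by simp,
      Or.inl (by exact_mod_cast hc)⟩
  by_cases hu : localConvexExt f u = ⊤
  · rw [hu, EReal.coe_mul_top_of_pos ha', EReal.top_add_of_ne_bot (hnb' b v hb)]
    exact le_top
  by_cases hv : localConvexExt f v = ⊤
  · rw [hv, EReal.coe_mul_top_of_pos hb', EReal.add_top_of_ne_bot (hnb' a u ha)]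
    exact le_top
  lift localConvexExt f u to ℝ using ⟨hu, localConvexExt_ne_bot hnb u⟩ with p hp
  lift localConvexExt f v to ℝ using ⟨hv, localConvexExt_ne_bot hnb v⟩ with q hq
  refine EReal.le_of_forall_lt_iff_le.1 fun c hc => ?_
  rw [← EReal.coe_mul, ← EReal.coe_mul, ← EReal.coe_add, EReal.coe_lt_coe_iff] at hc
  obtain ⟨S, w, hw, -, hS, hcu⟩ := exists_isConvComb_of_localConvexExt_lt hnb (u := u)
    (c := p + (c - (a * p + b * q))) (by rw [← hp, EReal.coe_lt_coe_iff]; linarith)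
  obtain ⟨S', w', hw', -, hS', hcv⟩ := exists_isConvComb_of_localConvexExt_lt hnb (u := v)
    (c := q + (c - (a * p + b * q))) (by rw [← hq, EReal.coe_lt_coe_iff]; linarith)
  refine (hmid.localConvexExt_le hnb (hw.combine hw' ha hb hab) fun z hz =>
    (Finset.mem_union.1 hz).elim (hS z) (hS' z)).trans (EReal.coe_le_coe_iff.2 ?_)
  rw [hw.sum_combine hw']
  obtain rfl : b = 1 - a := by linarith
  nlinarith

end Midpoint

/-! ### Convex envelopes -/

section Envelope

variable {n : ℕ}

/-- Jensen's inequality for extended-real-valued convex functions. -/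
lemma ConvexEFn.le_sum {F : (Fin n → ℝ) → EReal} (hF : ConvexEFn F) {g : (Fin n → ℤ) → EReal}
    (hnb : ∀ x, g x ≠ ⊥) (hFg : ∀ z : Fin n → ℤ, F (fun i => (z i : ℝ)) ≤ g z)
    {S : Finset (Fin n → ℤ)} {w : (Fin n → ℤ) → ℝ} {u : Fin n → ℝ}
    (h : IsConvComb S w u) (hS : ∀ z ∈ S, g z ≠ ⊤) :
    F u ≤ ((∑ z ∈ S, w z * (g z).toReal : ℝ) : EReal) := by
  have hconv : Convex ℝ {p : (Fin n → ℝ) × ℝ | F p.1 ≤ (p.2 : EReal)} := by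
    intro p hp q hq a b ha hb hab
    refine (hF.2 p.1 q.1 a b ha hb hab).trans ?_
    have ha' : (0 : EReal) ≤ a := by exact_mod_cast ha
    have hb' : (0 : EReal) ≤ b := by exact_mod_cast hb
    have h1 := mul_le_mul_of_nonneg_left (show F p.1 ≤ (p.2 : EReal) from hp) ha'
    have h2 := mul_le_mul_of_nonneg_left (show F q.1 ≤ (q.2 : EReal) from hq) hb'
    refine (add_le_add h1 h2).trans (le_of_eq ?_)
    simp
  have hmem := hconv.sum_mem (t := S) (w := w)
    (z := fun z => ((fun i => (z i : ℝ)), (g z).toReal)) (fun z _ => h.nonneg z) h.sum_eq_one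
    fun z hz => by
      show F (fun i => (z i : ℝ)) ≤ ((g z).toReal : EReal)
      rw [EReal.coe_toReal (hS z hz) (hnb z)]
      exact hFg z
  have hu : (∑ z ∈ S, w z • ((fun i => (z i : ℝ)), (g z).toReal) : (Fin n → ℝ) × ℝ) =
      (u, ∑ z ∈ S, w z * (g z).toReal) := by
    refine Prod.ext (funext fun i => ?_) ?_
    · simp [Prod.fst_sum, Finset.sum_apply, h.sum_mul]
    · simp [Prod.snd_sum]
  rw [hu] at hmem
  exact hmem

lemma LocalMidpointConvex.convEnvelope_eq {f : (Fin n → ℤ) → EReal}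
    (hmid : LocalMidpointConvex f) (hnb : ∀ x, f x ≠ ⊥) :
    convEnvelope f = localConvexExt f := by
  refine funext fun u => le_antisymm (iSup₂_le fun F hF => ?_) ?_
  · refine EReal.le_of_forall_lt_iff_le.1 fun c hc => ?_
    obtain ⟨S, w, h, -, hS, hcost⟩ := exists_isConvComb_of_localConvexExt_lt hnb hc
    exact (hF.1.le_sum hnb hF.2 h hS).trans (EReal.coe_le_coe_iff.2 hcost.le)
  · exact le_iSup₂_of_le (localConvexExt f) ⟨hmid.convexEFn hnb, localConvexExt_coe_le f⟩ le_rfl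

lemma ConvexEFn.add {F G : (Fin n → ℝ) → EReal} (hF : ConvexEFn F) (hG : ConvexEFn G) :
    ConvexEFn fun u => F u + G u := by
  refine ⟨fun u => EReal.add_ne_bot_iff.2 ⟨hF.1 u, hG.1 u⟩, fun u v a b ha hb hab => ?_⟩
  refine (add_le_add (hF.2 u v a b ha hb hab) (hG.2 u v a b ha hb hab)).trans (le_of_eq ?_)
  rw [EReal.left_distrib_of_nonneg_of_ne_top (by exact_mod_cast ha) (EReal.coe_ne_top a),
    EReal.left_distrib_of_nonneg_of_ne_top (by exact_mod_cast hb) (EReal.coe_ne_top b)]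
  exact add_add_add_comm _ _ _ _

end Envelope

/-! ### Separable convex functions -/

section Univariate

variable {φ : ℤ → EReal}

lemma toReal_second_difference_nonneg (hnb : ∀ k, φ k ≠ ⊥)
    (hconv : ∀ k : ℤ, (2 : EReal) * φ k ≤ φ (k - 1) + φ (k + 1)) {k : ℤ}
    (h0 : φ (k - 1) ≠ ⊤) (h1 : φ k ≠ ⊤) (h2 : φ (k + 1) ≠ ⊤) :
    2 * (φ k).toReal ≤ (φ (k - 1)).toReal + (φ (k + 1)).toReal := by
  have := hconv k
  rw [← EReal.coe_toReal h0 (hnb _), ← EReal.coe_toReal h1 (hnb _),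
    ← EReal.coe_toReal h2 (hnb _), ← EReal.coe_add,
    show (2 : EReal) = ((2 : ℝ) : EReal) from rfl] at this
  exact_mod_cast this

lemma toReal_shrink_le (hnb : ∀ k, φ k ≠ ⊥)
    (hconv : ∀ k : ℤ, (2 : EReal) * φ k ≤ φ (k - 1) + φ (k + 1)) (a : ℤ) (d : ℕ)
    (hfin : ∀ l, a ≤ l → l ≤ a + d + 1 → φ l ≠ ⊤) :
    (φ (a + 1)).toReal + (φ (a + d)).toReal ≤ (φ a).toReal + (φ (a + d + 1)).toReal := by
  induction d with
  | zero => simp [add_comm]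
  | succ d ih =>
    have h1 := ih fun l h1 h2 => hfin l h1 (by push_cast; omega)
    have h2 := toReal_second_difference_nonneg hnb hconv (k := a + d + 1)
      (hfin _ (by omega) (by push_cast; omega)) (hfin _ (by omega) (by push_cast; omega))
      (hfin _ (by omega) (by push_cast; omega))
    rw [show a + (d : ℤ) + 1 - 1 = a + d by ring] at h2
    rw [show a + ((d + 1 : ℕ) : ℤ) = a + d + 1 by push_cast; ring]
    linarith

/-- Replacing two integers by the two halves of their sum rounded down and up does not increase
a discrete convex function. -/
lemma toReal_midpoint_le (hnb : ∀ k, φ k ≠ ⊥)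
    (hconv : ∀ k : ℤ, (2 : EReal) * φ k ≤ φ (k - 1) + φ (k + 1)) (d : ℕ) :
    ∀ a : ℤ, (∀ l, a ≤ l → l ≤ a + d → φ l ≠ ⊤) →
      (φ ((a + (a + d)) / 2)).toReal + (φ (a + (a + d) - (a + (a + d)) / 2)).toReal ≤
        (φ a).toReal + (φ (a + d)).toReal := by
  induction d using Nat.strong_induction_on with
  | _ d ih =>
    intro a hfin
    match d, ih, hfin with
    | 0, _, _ =>
      rw [show (a + (a + ((0 : ℕ) : ℤ))) / 2 = a by push_cast; omega]
      simp
    | 1, _, _ =>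
      rw [show (a + (a + ((1 : ℕ) : ℤ))) / 2 = a by push_cast; omega]
      simp
    | d + 2, ih, hfin =>
      have h1 := ih d (by omega) (a + 1) fun l h1 h2 =>
        hfin l (by omega) (by push_cast; omega)
      have h2 := toReal_shrink_le hnb hconv a (d + 1) fun l h1 h2 =>
        hfin l h1 (by push_cast at h2 ⊢; omega)
      rw [show a + 1 + (a + 1 + (d : ℤ)) = a + (a + ((d + 2 : ℕ) : ℤ)) by push_cast; ring,
        show a + 1 + (d : ℤ) = a + ((d + 1 : ℕ) : ℤ) by push_cast; ring] at h1
      rw [show a + ((d + 1 : ℕ) : ℤ) + 1 = a + ((d + 2 : ℕ) : ℤ) by push_cast; ring] at h2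
      linarith

end Univariate

section Separable

variable {n : ℕ} {φ : Fin n → ℤ → EReal}

lemma separable_ne_bot (hnb : ∀ i k, φ i k ≠ ⊥) (x : Fin n → ℤ) : ∑ i, φ i (x i) ≠ ⊥ :=
  EReal.finset_sum_ne_bot fun i _ => hnb i (x i)

lemma separable_ne_top_iff (hnb : ∀ i k, φ i k ≠ ⊥) {x : Fin n → ℤ} :
    ∑ i, φ i (x i) ≠ ⊤ ↔ ∀ i, φ i (x i) ≠ ⊤ := by
  refine ⟨fun h i => EReal.ne_top_of_finset_sum_ne_top (fun i _ => hnb i (x i)) h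
    (Finset.mem_univ i), fun h => ?_⟩
  rw [EReal.finset_sum_eq_coe_toReal (fun i _ => hnb i (x i)) fun i _ => h i]
  exact EReal.coe_ne_top _

lemma toReal_separable (hnb : ∀ i k, φ i k ≠ ⊥) {x : Fin n → ℤ} (h : ∀ i, φ i (x i) ≠ ⊤) :
    (∑ i, φ i (x i)).toReal = ∑ i, (φ i (x i)).toReal := by
  rw [EReal.finset_sum_eq_coe_toReal (fun i _ => hnb i (x i)) fun i _ => h i, EReal.toReal_coe]

lemma localMidpointConvex_separable (hnb : ∀ i k, φ i k ≠ ⊥)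
    (hdom : ∀ i (k l m : ℤ), k ≤ l → l ≤ m → φ i k ≠ ⊤ → φ i m ≠ ⊤ → φ i l ≠ ⊤)
    (hconv : ∀ i (k : ℤ), (2 : EReal) * φ i k ≤ φ i (k - 1) + φ i (k + 1)) :
    LocalMidpointConvex fun x => ∑ i, φ i (x i) := by
  classical
  intro x y _
  change localConvexExt _ _ ≤ (∑ i, φ i (x i) + ∑ i, φ i (y i)) / 2
  have htwo : (⊤ : EReal) / 2 = ⊤ :=
    EReal.top_div_of_pos_ne_top (by norm_num) (EReal.coe_ne_top 2)
  have hnb' := separable_ne_bot hnb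
  by_cases hx : ∑ i, φ i (x i) = ⊤
  · rw [hx, EReal.top_add_of_ne_bot (hnb' y), htwo]
    exact le_top
  by_cases hy : ∑ i, φ i (y i) = ⊤
  · rw [hy, EReal.add_top_of_ne_bot (hnb' x), htwo]
    exact le_top
  have hx' := (separable_ne_top_iff hnb).1 hx
  have hy' := (separable_ne_top_iff hnb).1 hy
  set p : Fin n → ℤ := fun i => (x i + y i) / 2 with hp
  set q : Fin n → ℤ := fun i => x i + y i - (x i + y i) / 2 with hq
  have hbetween : ∀ i l, min (x i) (y i) ≤ l → l ≤ max (x i) (y i) → φ i l ≠ ⊤ := by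
    intro i l h1 h2
    refine hdom i _ l _ h1 h2 ?_ ?_
    · rcases min_choice (x i) (y i) with h | h <;> rw [h]
      exacts [hx' i, hy' i]
    · rcases max_choice (x i) (y i) with h | h <;> rw [h]
      exacts [hx' i, hy' i]
  have hpf : ∀ i, φ i (p i) ≠ ⊤ := fun i => hbetween i _ (by grind) (by grind)
  have hqf : ∀ i, φ i (q i) ≠ ⊤ := fun i => hbetween i _ (by grind) (by grind)
  have hle : ∀ i, (φ i (p i)).toReal + (φ i (q i)).toReal ≤
      (φ i (x i)).toReal + (φ i (y i)).toReal := by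
    intro i
    rcases le_total (x i) (y i) with h | h
    · have := toReal_midpoint_le (hnb i) (hconv i) (y i - x i).toNat (x i) fun l h1 h2 =>
        hbetween i l (by omega) (by omega)
      rwa [show x i + ((y i - x i).toNat : ℤ) = y i by omega] at this
    · have := toReal_midpoint_le (hnb i) (hconv i) (x i - y i).toNat (y i) fun l h1 h2 =>
        hbetween i l (by omega) (by omega)
      rw [show y i + ((x i - y i).toNat : ℤ) = x i by omega, add_comm (y i)] at this
      rwa [add_comm (φ i (x i)).toReal]
  have hcomb : IsConvComb {p, q}
      (fun z => (if z = p then 1 / 2 else 0) + (if z = q then 1 / 2 else 0) : (Fin n → ℤ) → ℝ)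
      fun i => ((x i + y i : ℤ) : ℝ) / 2 := by
    refine ⟨fun z => by positivity, fun z hz => ?_, ?_, fun i => ?_⟩
    · simp only [Finset.mem_insert, Finset.mem_singleton, not_or] at hz
      simp [hz.1, hz.2]
    · simp only [Finset.sum_add_distrib, Finset.sum_ite_eq']
      norm_num
    · simp only [add_mul, ite_mul, zero_mul, Finset.sum_add_distrib, Finset.sum_ite_eq']
      simp only [Finset.mem_insert, Finset.mem_singleton, true_or, or_true, if_true, hp, hq]
      push_cast
      ring
  refine (localConvexExt_le_of_isConvComb hnb' hcomb ?_ ?_).trans ?_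
  · intro z hz
    rw [Finset.mem_insert, Finset.mem_singleton] at hz
    rcases hz with rfl | rfl
    exacts [(separable_ne_top_iff hnb).2 hpf, (separable_ne_top_iff hnb).2 hqf]
  · intro z hz _ i
    have h1 : (2 * p i : ℝ) ≤ x i + y i := by
      exact_mod_cast (show 2 * p i ≤ x i + y i by grind)
    have h2 : (x i + y i : ℝ) ≤ 2 * p i + 1 := by
      exact_mod_cast (show x i + y i ≤ 2 * p i + 1 by grind)
    have h3 : (q i : ℝ) = x i + y i - p i := by simp [hp, hq]
    rw [Finset.mem_insert, Finset.mem_singleton] at hz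
    push_cast
    rw [abs_lt]
    rcases hz with rfl | rfl <;> constructor <;> linarith
  · have hsum : ∑ z ∈ {p, q}, ((if z = p then 1 / 2 else 0) + (if z = q then 1 / 2 else 0)) *
        (∑ i, φ i (z i)).toReal = (∑ i, ((φ i (p i)).toReal + (φ i (q i)).toReal)) / 2 := by
      simp only [add_mul, ite_mul, zero_mul, Finset.sum_add_distrib, Finset.sum_ite_eq']
      simp only [Finset.mem_insert, Finset.mem_singleton, true_or, or_true, if_true,
        toReal_separable hnb hpf, toReal_separable hnb hqf]
      ring
    rw [hsum, ← EReal.coe_toReal hx (hnb' x), ← EReal.coe_toReal hy (hnb' y),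
      toReal_separable hnb hx', toReal_separable hnb hy', ← EReal.coe_add,
      show (2 : EReal) = ((2 : ℝ) : EReal) from rfl, ← EReal.coe_div, EReal.coe_le_coe_iff,
      ← Finset.sum_add_distrib]
    exact div_le_div_of_nonneg_right (Finset.sum_le_sum fun i _ => hle i) zero_le_two

/-- A univariate function agrees with an affine function on any integral neighborhood. -/
lemma exists_affine_of_abs_sub_lt_one (g : ℤ → ℝ) (t : ℝ) :
    ∃ A B : ℝ, ∀ k : ℤ, |t - k| < 1 → g k = A + B * k := by
  refine ⟨g ⌊t⌋ - (g (⌊t⌋ + 1) - g ⌊t⌋) * ⌊t⌋, g (⌊t⌋ + 1) - g ⌊t⌋, fun k hk => ?_⟩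
  have hk' := abs_lt.1 hk
  have h1 : ⌊t⌋ < k + 1 := Int.floor_lt.2 (by push_cast; linarith)
  have h2 : k - 1 ≤ ⌊t⌋ := Int.le_floor.2 (by push_cast; linarith)
  obtain rfl | rfl : k = ⌊t⌋ ∨ k = ⌊t⌋ + 1 := by omega
  · ring
  · push_cast
    ring

/-- If some local convex combination at `u` has finite separable values, then so does any
point of the integral neighborhood of `u`. -/
lemma separable_ne_top_of_mem_intNbhd (hnb : ∀ i k, φ i k ≠ ⊥) {S : Finset (Fin n → ℤ)}
    {w : (Fin n → ℤ) → ℝ} {u : Fin n → ℝ} (h : IsConvComb S w u)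
    (hN : ∀ z ∈ S, z ∈ intNbhd u) (hS : ∀ z ∈ S, ∑ i, φ i (z i) ≠ ⊤)
    {x : Fin n → ℤ} (hx : x ∈ intNbhd u) : ∑ i, φ i (x i) ≠ ⊤ := by
  refine (separable_ne_top_iff hnb).2 fun i => ?_
  have hxi := abs_lt.1 (hx i)
  obtain ⟨z, hz, hzx⟩ : ∃ z ∈ S, z i = x i := by
    rcases le_total (x i : ℝ) (u i) with hle | hle
    · obtain ⟨z, hz, hzu⟩ := h.exists_le i
      have hzi := abs_lt.1 (hN z hz i)
      have h1 : z i < x i + 1 := by exact_mod_cast (show (z i : ℝ) < x i + 1 by linarith)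
      have h2 : x i < z i + 1 := by exact_mod_cast (show (x i : ℝ) < z i + 1 by linarith)
      exact ⟨z, hz, by omega⟩
    · obtain ⟨z, hz, hzu⟩ := h.exists_ge i
      have hzi := abs_lt.1 (hN z hz i)
      have h1 : z i < x i + 1 := by exact_mod_cast (show (z i : ℝ) < x i + 1 by linarith)
      have h2 : x i < z i + 1 := by exact_mod_cast (show (x i : ℝ) < z i + 1 by linarith)
      exact ⟨z, hz, by omega⟩
  rw [← hzx]
  exact (separable_ne_top_iff hnb).1 (hS z hz) i

/-- All local convex combinations at `u` of finite values of a separable function agree. -/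
lemma sum_separable_eq_of_intNbhd (hnb : ∀ i k, φ i k ≠ ⊥) {S S' : Finset (Fin n → ℤ)}
    {w w' : (Fin n → ℤ) → ℝ} {u : Fin n → ℝ} (h : IsConvComb S w u) (h' : IsConvComb S' w' u)
    (hN : ∀ z ∈ S, z ∈ intNbhd u) (hN' : ∀ z ∈ S', z ∈ intNbhd u)
    (hS : ∀ z ∈ S, ∑ i, φ i (z i) ≠ ⊤) (hS' : ∀ z ∈ S', ∑ i, φ i (z i) ≠ ⊤) :
    ∑ z ∈ S, w z * (∑ i, φ i (z i)).toReal = ∑ z ∈ S', w' z * (∑ i, φ i (z i)).toReal := by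
  choose A B hAB using fun i => exists_affine_of_abs_sub_lt_one (fun k => (φ i k).toReal) (u i)
  have key : ∀ {T : Finset (Fin n → ℤ)} {l : (Fin n → ℤ) → ℝ}, IsConvComb T l u →
      (∀ z ∈ T, z ∈ intNbhd u) → (∀ z ∈ T, ∑ i, φ i (z i) ≠ ⊤) →
      ∑ z ∈ T, l z * (∑ i, φ i (z i)).toReal = ∑ i, A i + ∑ i, B i * u i := by
    intro T l hl hTN hT
    rw [← hl.sum_affine]
    refine Finset.sum_congr rfl fun z hz => ?_
    rw [toReal_separable hnb ((separable_ne_top_iff hnb).1 (hT z hz)), ← Finset.sum_add_distrib]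
    exact congrArg _ (Finset.sum_congr rfl fun i _ => hAB i (z i) (hTN z hz i))
  rw [key h hN hS, key h' hN' hS']

end Separable

/-- **Convex envelope of the sum of an integrally convex function and a
separable convex function.**  If f is integrally convex and
Φ(x) = Σᵢ φᵢ(xᵢ) is separable convex, then the convex envelope of f + Φ is
the sum of the convex envelopes of f and Φ. -/
theorem convEnvelope_add_separable (n : ℕ)
    (f : (Fin n → ℤ) → EReal) (hnb : ∀ x, f x ≠ ⊥)
    (hf : IntegrallyConvexFn f)
    (φ : Fin n → ℤ → EReal)
    (hφnb : ∀ i k, φ i k ≠ ⊥)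
    (hφint : ∀ i (k l m : ℤ), k ≤ l → l ≤ m → φ i k ≠ ⊤ → φ i m ≠ ⊤ → φ i l ≠ ⊤)
    (hφconv : ∀ i (k : ℤ), (2 : EReal) * φ i k ≤ φ i (k - 1) + φ i (k + 1)) :
    ∀ u : Fin n → ℝ,
      convEnvelope (fun x => f x + ∑ i, φ i (x i)) u =
        convEnvelope f u + convEnvelope (fun x => ∑ i, φ i (x i)) u := by
  have hΦnb := separable_ne_bot hφnb
  have hfm : LocalMidpointConvex f := hf.2
  have hΦm := localMidpointConvex_separable hφnb hφint hφconv
  intro u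
  rw [hfm.convEnvelope_eq hnb, hΦm.convEnvelope_eq hΦnb]
  refine le_antisymm (iSup₂_le fun F hF => ?_) ?_
  · by_cases hu : localConvexExt f u = ⊤
    · rw [hu, EReal.top_add_of_ne_bot (localConvexExt_ne_bot hΦnb u)]
      exact le_top
    by_cases hv : localConvexExt (fun x => ∑ i, φ i (x i)) u = ⊤
    · rw [hv, EReal.add_top_of_ne_bot (localConvexExt_ne_bot hnb u)]
      exact le_top
    lift localConvexExt f u to ℝ using ⟨hu, localConvexExt_ne_bot hnb u⟩ with p hp
    lift localConvexExt (fun x => ∑ i, φ i (x i)) u to ℝ using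
      ⟨hv, localConvexExt_ne_bot hΦnb u⟩ with q hq
    refine EReal.le_of_forall_lt_iff_le.1 fun c hc => ?_
    rw [← EReal.coe_add, EReal.coe_lt_coe_iff] at hc
    obtain ⟨S, w, hw, hN, hS, hcu⟩ := exists_isConvComb_of_localConvexExt_lt hnb (u := u)
      (c := p + (c - (p + q)) / 2) (by rw [← hp, EReal.coe_lt_coe_iff]; linarith)
    obtain ⟨S', w', hw', hN', hS', hcv⟩ := exists_isConvComb_of_localConvexExt_lt hΦnb (u := u)
      (c := q + (c - (p + q)) / 2) (by rw [← hq, EReal.coe_lt_coe_iff]; linarith)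
    have hSΦ : ∀ z ∈ S, ∑ i, φ i (z i) ≠ ⊤ := fun z hz =>
      separable_ne_top_of_mem_intNbhd hφnb hw' hN' hS' (hN z hz)
    refine (hF.1.le_sum (fun x => EReal.add_ne_bot_iff.2 ⟨hnb x, hΦnb x⟩) hF.2 hw fun z hz =>
      (EReal.add_ne_top_iff_ne_top₂ (hnb z) (hΦnb z)).2 ⟨hS z hz, hSΦ z hz⟩).trans
        (EReal.coe_le_coe_iff.2 ?_)
    have hsplit : ∑ z ∈ S, w z * (f z + ∑ i, φ i (z i)).toReal =
        ∑ z ∈ S, w z * (f z).toReal + ∑ z ∈ S, w z * (∑ i, φ i (z i)).toReal := by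
      rw [← Finset.sum_add_distrib]
      refine Finset.sum_congr rfl fun z hz => ?_
      rw [EReal.toReal_add (hS z hz) (hnb z) (hSΦ z hz) (hΦnb z), mul_add]
    rw [hsplit, sum_separable_eq_of_intNbhd hφnb hw hw' hN hN' hSΦ hS']
    linarith
  · exact le_iSup₂_of_le (fun u => localConvexExt f u + localConvexExt _ u)
      ⟨(hfm.convexEFn hnb).add (hΦm.convexEFn hΦnb), fun z =>
        add_le_add (localConvexExt_coe_le f z) (localConvexExt_coe_le _ z)⟩ le_rfl
end

section
/- If S ⊆ ℤⁿ is an integrally convex set, then its convex hull is a box-integer polyhedron; conversely, if P ⊆ ℝⁿ is a box-integer polyhedron, then S = P ∩ ℤⁿ is an integrally convex set. -/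
open scoped BigOperators

/-- Coercion of an integer point to a real point. -/
def castR {n : ℕ} (z : Fin n → ℤ) : Fin n → ℝ := fun i => (z i : ℝ)

/-- A nonempty S ⊆ ℤⁿ is *integrally convex* if every real point of its
convex hull lies in the convex hull of S ∩ N(u). -/
def IntegrallyConvexSet {n : ℕ} (S : Set (Fin n → ℤ)) : Prop :=
  S.Nonempty ∧ ∀ u : Fin n → ℝ, u ∈ convexHull ℝ (castR '' S) →
    u ∈ convexHull ℝ (castR '' (S ∩ intNbhd u))

/-- P ⊆ ℝⁿ is a polyhedron: a finite intersection of closed half-spaces. -/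
def IsPolyhedron {n : ℕ} (P : Set (Fin n → ℝ)) : Prop :=
  ∃ (m : ℕ) (A : Fin m → Fin n → ℝ) (b : Fin m → ℝ),
    P = {x | ∀ i, (∑ j, A i j * x j) ≤ b i}

/-- A (bounded) set is an integer polytope when it is the convex hull of its
integer points (equivalently, all its vertices are integral). -/
def IsIntegerPolytope {n : ℕ} (Q : Set (Fin n → ℝ)) : Prop :=
  Q = convexHull ℝ (castR '' {z : Fin n → ℤ | castR z ∈ Q})

/-- A polyhedron P is *box-integer* if its intersection with every integer
box [a, b] is an integer polytope. -/
def IsBoxIntegerPolyhedron {n : ℕ} (P : Set (Fin n → ℝ)) : Prop :=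
  IsPolyhedron P ∧ ∀ a b : Fin n → ℤ,
    IsIntegerPolytope (P ∩ {x | ∀ i, (a i : ℝ) ≤ x i ∧ x i ≤ (b i : ℝ)})

open Matrix in
/-- Weyl's theorem: a finitely generated cone is cut out by finitely many linear inequalities. -/
theorem exists_finset_mem_hull_iff_dotProduct_nonpos {n : ℕ} (D : Finset (Fin n → ℝ)) :
    ∃ F : Finset (Fin n → ℝ),
      ∀ x, x ∈ PointedCone.hull ℝ (D : Set (Fin n → ℝ)) ↔ ∀ a ∈ F, a ⬝ᵥ x ≤ 0 := by
  classical
  induction D using Finset.induction_on with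
  | empty =>
    refine ⟨Finset.univ.image (fun i => Pi.single i 1) ∪
      Finset.univ.image (fun i => Pi.single i (-1)), fun x => ?_⟩
    simp only [Finset.coe_empty, PointedCone.hull, Submodule.span_empty, Submodule.mem_bot]
    constructor
    · rintro rfl a -
      simp
    · intro h
      ext i
      have h₁ := h (Pi.single i 1) (by simp)
      have h₂ := h (Pi.single i (-1)) (by simp)
      simp only [single_dotProduct] at h₁ h₂
      simp only [Pi.zero_apply]
      linarith
  | insert d D _ ih =>
    obtain ⟨F, hF⟩ := ih
    have key : ∀ x, x ∈ PointedCone.hull ℝ ((insert d D : Finset (Fin n → ℝ)) : Set _) ↔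
        ∃ t : ℝ, 0 ≤ t ∧ ∀ a ∈ F, a ⬝ᵥ x ≤ t * (a ⬝ᵥ d) := by
      intro x
      rw [Finset.coe_insert, PointedCone.hull, Submodule.mem_span_insert]
      constructor
      · rintro ⟨t, z, hz, rfl⟩
        refine ⟨t, t.2, fun a ha => ?_⟩
        have := (hF z).1 hz a ha
        have h : a ⬝ᵥ (t • d) = (t : ℝ) * (a ⬝ᵥ d) := dotProduct_smul (t : ℝ) a d
        rw [dotProduct_add, h]
        linarith
      · rintro ⟨t, ht, h⟩
        refine ⟨⟨t, ht⟩, x - t • d, (hF _).2 fun a ha => ?_, ?_⟩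
        · rw [dotProduct_sub, dotProduct_smul, smul_eq_mul]
          linarith [h a ha]
        · change x = t • d + (x - t • d)
          abel
    refine ⟨F.filter (fun a => a ⬝ᵥ d ≤ 0) ∪
      ((F.filter (fun a => 0 < a ⬝ᵥ d)) ×ˢ (F.filter (fun a => a ⬝ᵥ d < 0))).image
        (fun r => (r.1 ⬝ᵥ d) • r.2 - (r.2 ⬝ᵥ d) • r.1), fun x => ?_⟩
    rw [key]
    constructor
    · rintro ⟨t, ht, h⟩ a ha
      simp only [Finset.mem_union, Finset.mem_filter, Finset.mem_image, Finset.mem_product] at ha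
      rcases ha with ⟨haF, had⟩ | ⟨⟨p, q⟩, ⟨⟨hp, hpd⟩, hq, hqd⟩, rfl⟩
      · nlinarith [h a haF]
      · simp only [sub_dotProduct, smul_dotProduct, smul_eq_mul]
        have h₁ := mul_le_mul_of_nonneg_left (h q hq) hpd.le
        have h₂ := mul_le_mul_of_nonpos_left (h p hp) hqd.le
        dsimp only at hpd hqd h₁ h₂ ⊢
        nlinarith
    · intro h
      obtain ⟨t, htm, htmax⟩ := (insert 0 ((F.filter (fun a => 0 < a ⬝ᵥ d)).image
        (fun p => (p ⬝ᵥ x) / (p ⬝ᵥ d)))).exists_max_image id (Finset.insert_nonempty _ _)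
      have ht0 : 0 ≤ t := htmax 0 (by simp)
      refine ⟨t, ht0, fun a ha => ?_⟩
      rcases lt_trichotomy (a ⬝ᵥ d) 0 with had | had | had
      · simp only [Finset.mem_insert, Finset.mem_image, Finset.mem_filter] at htm
        rcases htm with rfl | ⟨p, ⟨hp, hpd⟩, rfl⟩
        · rw [zero_mul]
          exact h a (by simp [ha, had.le])
        · have := h ((p ⬝ᵥ d) • a - (a ⬝ᵥ d) • p) (Finset.mem_union_right _
            (Finset.mem_image.2 ⟨(p, a), by simp [hp, hpd, ha, had], rfl⟩))
          simp only [sub_dotProduct, smul_dotProduct, smul_eq_mul] at this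
          rw [div_mul_eq_mul_div, le_div_iff₀ hpd]
          linarith
      · rw [had, mul_zero]
        exact h a (by simp [ha, had.le])
      · have := htmax ((a ⬝ᵥ x) / (a ⬝ᵥ d)) (Finset.mem_insert_of_mem
          (Finset.mem_image.2 ⟨a, by simp [ha, had], rfl⟩))
        exact (div_le_iff₀ had).1 this

/-- A nonempty set whose points can be separated from its complement by functionals from a fixed
finite family, each bounded on the set, is a polyhedron. -/
theorem isPolyhedron_of_finite_separation {n : ℕ} {C : Set (Fin n → ℝ)}
    (F : Finset (Fin n → ℝ))
    (h : ∀ x ∉ C, ∃ a ∈ F, ∃ u, (∀ c ∈ C, a ⬝ᵥ c ≤ a ⬝ᵥ u) ∧ a ⬝ᵥ u < a ⬝ᵥ x)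
    (hC : C.Nonempty) : IsPolyhedron C := by
  classical
  let G := F.filter (fun a => BddAbove ((a ⬝ᵥ ·) '' C))
  refine ⟨G.card, fun i => (G.equivFin.symm i : Fin n → ℝ),
    fun i => sSup (((G.equivFin.symm i : Fin n → ℝ) ⬝ᵥ ·) '' C), Set.ext fun x => ⟨?_, ?_⟩⟩
  · intro hx i
    exact le_csSup (Finset.mem_filter.1 (G.equivFin.symm i).2).2 (Set.mem_image_of_mem _ hx)
  · intro hx
    by_contra hxC
    obtain ⟨a, ha, u, hu, hux⟩ := h x hxC
    have hub : ∀ y ∈ (a ⬝ᵥ ·) '' C, y ≤ a ⬝ᵥ u := by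
      rintro _ ⟨c, hc, rfl⟩
      exact hu c hc
    have hx' := hx (G.equivFin ⟨a, Finset.mem_filter.2 ⟨ha, _, hub⟩⟩)
    simp only [Equiv.symm_apply_apply] at hx'
    exact absurd (hx'.trans (csSup_le (hC.image _) hub)) (not_le.2 hux)

theorem IsPolyhedron.convex {n : ℕ} {P : Set (Fin n → ℝ)} (hP : IsPolyhedron P) :
    Convex ℝ P := by
  obtain ⟨m, A, b, rfl⟩ := hP
  rw [Set.ofPred_forall]
  refine convex_iInter fun i => convex_halfSpace_le (f := fun x => A i ⬝ᵥ x) ?_ (b i)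
  exact ⟨fun x y => dotProduct_add _ x y, fun c x => dotProduct_smul c _ x⟩

/-- The feasible cone of `convexHull ℝ V` at one of its points is generated by feasible
differences of points of `V`. -/
theorem sub_mem_hull_feasible_differences {E : Type*} [AddCommGroup E] [Module ℝ E] {V : Set E}
    {u y : E} (hu : u ∈ convexHull ℝ V) (hy : y ∈ convexHull ℝ V) :
    y - u ∈ PointedCone.hull ℝ
      {g : E | ∃ w ∈ V, ∃ v ∈ V, g = w - v ∧ ∃ ε : ℝ, 0 < ε ∧ u + ε • g ∈ convexHull ℝ V} := by
  classical
  set K := PointedCone.hull ℝ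
    {g : E | ∃ w ∈ V, ∃ v ∈ V, g = w - v ∧ ∃ ε : ℝ, 0 < ε ∧ u + ε • g ∈ convexHull ℝ V} with hK
  obtain ⟨ι, _, l, v, hl0, hl1, hv, hlv⟩ := mem_convexHull_iff_exists_fintype.1 hu
  have hV : V ⊆ {y | y - u ∈ K} := by
    intro w hw
    have hsum : w - u = ∑ i, l i • (w - v i) := by
      simp only [smul_sub, Finset.sum_sub_distrib, ← Finset.sum_smul, hl1, one_smul, hlv]
    change w - u ∈ K
    rw [hsum]
    refine Submodule.sum_mem _ fun i _ => ?_
    rcases (hl0 i).eq_or_lt with hi | hi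
    · rw [← hi, zero_smul]
      exact K.zero_mem
    · refine PointedCone.smul_mem _ hi.le (PointedCone.subset_hull
        ⟨w, hw, v i, hv i, rfl, l i, hi, ?_⟩)
      refine mem_convexHull_of_exists_fintype l (Function.update v i w) hl0 hl1 (fun j => ?_) ?_
      · by_cases hj : j = i
        · subst hj
          simpa using hw
        · simpa [hj] using hv j
      · rw [← hlv, ← sub_eq_iff_eq_add', ← Finset.sum_sub_distrib, Finset.sum_eq_single i]
        · simp [smul_sub]
        · intro j _ hj
          simp [hj]
        · simp
  have hconv : Convex ℝ {y | y - u ∈ K} := by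
    have := (PointedCone.convex K).translate_preimage_left (-u)
    simpa [Set.preimage, sub_eq_add_neg] using this
  exact convexHull_min hV hconv hy

/-- The feasible directions of a convex set at one of its points form a convex cone. -/
theorem Convex.exists_add_smul_mem_of_mem_hull {E : Type*} [AddCommGroup E] [Module ℝ E]
    {C D : Set E} (hC : Convex ℝ C) {u : E} (hu : u ∈ C)
    (hD : ∀ d ∈ D, ∃ ε : ℝ, 0 < ε ∧ u + ε • d ∈ C) {y : E} (hy : y ∈ PointedCone.hull ℝ D) :
    ∃ ε : ℝ, 0 < ε ∧ u + ε • y ∈ C := by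
  induction hy using Submodule.span_induction with
  | mem d hd => exact hD d hd
  | zero => exact ⟨1, one_pos, by simpa using hu⟩
  | add y z _ _ hy hz =>
    obtain ⟨ε, hε, hyC⟩ := hy
    obtain ⟨δ, hδ, hzC⟩ := hz
    refine ⟨ε * δ / (ε + δ), by positivity, ?_⟩
    have := hC hyC hzC (a := δ / (ε + δ)) (b := ε / (ε + δ)) (by positivity) (by positivity)
      (by field_simp; ring)
    convert this using 1
    match_scalars <;> field_simp
    ring
  | smul c y _ hy =>
    obtain ⟨ε, hε, hyC⟩ := hy
    rcases eq_or_ne c 0 with rfl | hc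
    · exact ⟨1, one_pos, by simpa using hu⟩
    · have hc' : 0 < (c : ℝ) := lt_of_le_of_ne c.2 fun h => hc (Subtype.ext h.symm)
      refine ⟨ε / c, by positivity, ?_⟩
      change u + (ε / (c : ℝ)) • ((c : ℝ) • y) ∈ C
      rwa [smul_smul, div_mul_cancel₀ _ hc'.ne']

/-- If a nonempty convex set `C` meets every integer box in a closed set, then each point outside
`C` is seen from some point of `C` along a direction that is not feasible there. -/
theorem exists_mem_forall_add_smul_notMem {n : ℕ} {C : Set (Fin n → ℝ)} (hC : Convex ℝ C)
    (hne : C.Nonempty) (hclosed : ∀ a b : Fin n → ℤ,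
      IsClosed (C ∩ {x | ∀ i, (a i : ℝ) ≤ x i ∧ x i ≤ (b i : ℝ)}))
    {x : Fin n → ℝ} (hx : x ∉ C) :
    ∃ u ∈ C, ∀ ε : ℝ, 0 < ε → u + ε • (x - u) ∉ C := by
  obtain ⟨c, hc⟩ := hne
  let B := C ∩ {y | ∀ i, ((⌊min (c i) (x i)⌋ : ℤ) : ℝ) ≤ y i ∧
    y i ≤ ((⌈max (c i) (x i)⌉ : ℤ) : ℝ)}
  have hB : IsClosed B := hclosed (fun i => ⌊min (c i) (x i)⌋) (fun i => ⌈max (c i) (x i)⌉)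
  have hmem : ∀ t ∈ Set.Icc (0 : ℝ) 1, AffineMap.lineMap c x t ∈ C →
      AffineMap.lineMap c x t ∈ B := by
    rintro t ⟨ht0, ht1⟩ h
    refine ⟨h, fun i => ?_⟩
    have e : AffineMap.lineMap c x t i = (1 - t) * c i + t * x i := by
      simp [AffineMap.lineMap_apply]
      ring
    have h₁ := Int.floor_le (min (c i) (x i))
    have h₂ := Int.le_ceil (max (c i) (x i))
    have h₃ := min_le_left (c i) (x i)
    have h₄ := min_le_right (c i) (x i)
    have h₅ := le_max_left (c i) (x i)
    have h₆ := le_max_right (c i) (x i)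
    rw [e]
    constructor <;> nlinarith
  have hcomp : IsCompact (Set.Icc (0 : ℝ) 1 ∩ AffineMap.lineMap c x ⁻¹' B) :=
    isCompact_Icc.inter_right (hB.preimage AffineMap.lineMap_continuous)
  obtain ⟨t, ⟨⟨ht0, ht1⟩, htB⟩, htmax⟩ := hcomp.exists_isGreatest
    ⟨0, by simp, hmem 0 (by simp) (by simpa using hc)⟩
  refine ⟨AffineMap.lineMap c x t, htB.1, fun ε hε hmemC => ?_⟩
  have ht : t < 1 := by
    refine lt_of_le_of_ne ht1 ?_
    rintro rfl
    exact hx (by simpa using htB.1)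
  have hδ : AffineMap.lineMap c x t + min ε 1 • (x - AffineMap.lineMap c x t) ∈ C := by
    have := hC.add_smul_mem htB.1 hmemC (t := min ε 1 / ε)
      ⟨by positivity, (div_le_one hε).2 (min_le_left _ _)⟩
    rwa [smul_smul, div_mul_cancel₀ _ hε.ne'] at this
  have heq : AffineMap.lineMap c x t + min ε 1 • (x - AffineMap.lineMap c x t) =
      AffineMap.lineMap c x (t + min ε 1 * (1 - t)) := by
    ext i
    simp [AffineMap.lineMap_apply]
    ring
  have hε1 : 0 < min ε 1 := lt_min hε one_pos
  have hε2 : min ε 1 ≤ 1 := min_le_right _ _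
  have hI : t + min ε 1 * (1 - t) ∈ Set.Icc (0 : ℝ) 1 := ⟨by nlinarith, by nlinarith⟩
  rw [heq] at hδ
  have := htmax ⟨hI, hmem _ hI hδ⟩
  nlinarith

theorem castR_sub {n : ℕ} (w v : Fin n → ℤ) : castR (w - v) = castR w - castR v := by
  ext i
  simp [castR]

theorem IntegrallyConvexSet.mem_convexHull_inter_box {n : ℕ} {S : Set (Fin n → ℤ)}
    (hS : IntegrallyConvexSet S) {a b : Fin n → ℤ} {u : Fin n → ℝ}
    (hu : u ∈ convexHull ℝ (castR '' S)) (hab : ∀ i, (a i : ℝ) ≤ u i ∧ u i ≤ (b i : ℝ)) :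
    u ∈ convexHull ℝ (castR '' (S ∩ Set.Icc a b)) := by
  refine convexHull_mono (Set.image_mono ?_) (hS.2 u hu)
  rintro z ⟨hz, hzu⟩
  refine ⟨hz, fun i => ?_, fun i => ?_⟩
  · have := (abs_lt.1 (hzu i)).2
    have h : (a i : ℝ) < z i + 1 := by linarith [(hab i).1]
    exact Int.lt_add_one_iff.1 (by exact_mod_cast h)
  · have := (abs_lt.1 (hzu i)).1
    have h : (z i : ℝ) < b i + 1 := by linarith [(hab i).2]
    exact Int.lt_add_one_iff.1 (by exact_mod_cast h)

theorem convex_setOf_forall_le_and_le {n : ℕ} (a b : Fin n → ℝ) :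
    Convex ℝ {x : Fin n → ℝ | ∀ i, a i ≤ x i ∧ x i ≤ b i} := by
  have : {x : Fin n → ℝ | ∀ i, a i ≤ x i ∧ x i ≤ b i} = Set.Icc a b := by
    ext x
    simp [Pi.le_def, forall_and]
  rw [this]
  exact convex_Icc a b

theorem IntegrallyConvexSet.convexHull_inter_box {n : ℕ} {S : Set (Fin n → ℤ)}
    (hS : IntegrallyConvexSet S) (a b : Fin n → ℤ) :
    convexHull ℝ (castR '' S) ∩ {x | ∀ i, (a i : ℝ) ≤ x i ∧ x i ≤ (b i : ℝ)} =
      convexHull ℝ (castR '' (S ∩ Set.Icc a b)) := by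
  refine Set.Subset.antisymm (fun u hu => hS.mem_convexHull_inter_box hu.1 hu.2)
    (Set.subset_inter (convexHull_mono (Set.image_mono Set.inter_subset_left)) ?_)
  refine convexHull_min ?_ (convex_setOf_forall_le_and_le _ _)
  rintro _ ⟨z, ⟨-, hz⟩, rfl⟩ i
  exact ⟨Int.cast_le.2 (hz.1 i), Int.cast_le.2 (hz.2 i)⟩

theorem IntegrallyConvexSet.isIntegerPolytope_inter_box {n : ℕ} {S : Set (Fin n → ℤ)}
    (hS : IntegrallyConvexSet S) (a b : Fin n → ℤ) :
    IsIntegerPolytope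
      (convexHull ℝ (castR '' S) ∩ {x | ∀ i, (a i : ℝ) ≤ x i ∧ x i ≤ (b i : ℝ)}) := by
  refine Set.Subset.antisymm ?_ (convexHull_min ?_ ?_)
  · conv_lhs => rw [hS.convexHull_inter_box]
    refine convexHull_mono (Set.image_mono ?_)
    rintro z ⟨hzS, hz⟩
    exact ⟨subset_convexHull ℝ _ ⟨z, hzS, rfl⟩,
      fun i => ⟨Int.cast_le.2 (hz.1 i), Int.cast_le.2 (hz.2 i)⟩⟩
  · rintro _ ⟨z, hz, rfl⟩
    exact hz
  · exact (convex_convexHull ℝ _).inter (convex_setOf_forall_le_and_le _ _)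

/-- The feasible cone of the convex hull of an integrally convex set at any point is generated by
integer vectors of bounded size. -/
theorem IntegrallyConvexSet.sub_mem_hull {n : ℕ} {S : Set (Fin n → ℤ)}
    (hS : IntegrallyConvexSet S) {u x : Fin n → ℝ} (hu : u ∈ convexHull ℝ (castR '' S))
    (hx : x ∈ convexHull ℝ (castR '' S)) :
    x - u ∈ PointedCone.hull ℝ (castR '' {g : Fin n → ℤ | g ∈ Set.Icc (fun _ => -3) (fun _ => 3) ∧
      ∃ ε : ℝ, 0 < ε ∧ u + ε • castR g ∈ convexHull ℝ (castR '' S)}) := by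
  set ε : ℝ := (1 + ‖x - u‖)⁻¹ with hεdef
  have hpos : 0 < 1 + ‖x - u‖ := by positivity
  have hε : 0 < ε := inv_pos.2 hpos
  have hε1 : ε ≤ 1 := inv_le_one_of_one_le₀ (by linarith [norm_nonneg (x - u)])
  have hstep : ∀ i, |ε * (x i - u i)| ≤ 1 := by
    intro i
    rw [abs_mul, abs_of_pos hε, hεdef, inv_mul_le_iff₀ hpos]
    have : |x i - u i| ≤ ‖x - u‖ := norm_le_pi_norm (x - u) i
    linarith
  set a : Fin n → ℤ := fun i => ⌊u i⌋ - 1 with ha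
  set b : Fin n → ℤ := fun i => ⌊u i⌋ + 2 with hb
  have hfl : ∀ i, (⌊u i⌋ : ℝ) ≤ u i ∧ u i < ⌊u i⌋ + 1 :=
    fun i => ⟨Int.floor_le _, Int.lt_floor_add_one _⟩
  have hu' := hS.mem_convexHull_inter_box (a := a) (b := b) hu fun i => by
    simp only [ha, hb]
    push_cast
    constructor <;> linarith [(hfl i).1, (hfl i).2]
  have hy := hS.mem_convexHull_inter_box (a := a) (b := b)
    ((convex_convexHull ℝ _).add_smul_sub_mem hu hx ⟨hε.le, hε1⟩) fun i => by
      have := abs_le.1 (hstep i)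
      simp only [ha, hb, Pi.add_apply, Pi.smul_apply, Pi.sub_apply, smul_eq_mul]
      push_cast
      constructor <;> linarith [(hfl i).1, (hfl i).2, this.1, this.2]
  have hmem := sub_mem_hull_feasible_differences hu' hy
  rw [add_sub_cancel_left] at hmem
  have hscaled := PointedCone.smul_mem _ (inv_nonneg.2 hε.le) hmem
  rw [inv_smul_smul₀ hε.ne'] at hscaled
  refine Submodule.span_mono ?_ hscaled
  rintro _ ⟨_, ⟨w, ⟨-, hw⟩, rfl⟩, _, ⟨v, ⟨-, hv⟩, rfl⟩, rfl, δ, hδ, hmemδ⟩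
  refine ⟨w - v, ⟨⟨fun i => ?_, fun i => ?_⟩, δ, hδ, ?_⟩, castR_sub w v⟩
  · have h₁ := hw.1 i
    have h₂ := hv.2 i
    simp only [ha, hb, Pi.sub_apply] at h₁ h₂ ⊢
    lia
  · have h₁ := hw.2 i
    have h₂ := hv.1 i
    simp only [ha, hb, Pi.sub_apply] at h₁ h₂ ⊢
    lia
  · rw [castR_sub]
    exact convexHull_mono (Set.image_mono Set.inter_subset_left) hmemδ

theorem IntegrallyConvexSet.isPolyhedron_convexHull {n : ℕ} {S : Set (Fin n → ℤ)}
    (hS : IntegrallyConvexSet S) : IsPolyhedron (convexHull ℝ (castR '' S)) := by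
  classical
  set C := convexHull ℝ (castR '' S) with hCdef
  have hC : Convex ℝ C := convex_convexHull ℝ _
  have hne : C.Nonempty := (hS.1.image _).convexHull
  choose F hF using exists_finset_mem_hull_iff_dotProduct_nonpos (n := n)
  let G : Finset (Fin n → ℤ) := Finset.Icc (fun _ => -3) (fun _ => 3)
  refine isPolyhedron_of_finite_separation (G.powerset.biUnion fun D => F (D.image castR))
    (fun x hx => ?_) hne
  obtain ⟨u, huC, hux⟩ := exists_mem_forall_add_smul_notMem hC hne (fun a b => by
    rw [hCdef, hS.convexHull_inter_box]
    exact (((Set.finite_Icc a b).inter_of_right S).image castR).isCompact_convexHull ℝ |>.isClosed)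
    hx
  let D := G.filter fun g => ∃ ε : ℝ, 0 < ε ∧ u + ε • castR g ∈ C
  have hD : ∀ c ∈ C, c - u ∈ PointedCone.hull ℝ ((D.image castR : Finset _) : Set (Fin n → ℝ)) := by
    intro c hc
    have := hS.sub_mem_hull huC hc
    convert this using 2
    ext g
    simp [D, G, hCdef, Set.mem_Icc]
  have hxD : x - u ∉ PointedCone.hull ℝ ((D.image castR : Finset _) : Set (Fin n → ℝ)) := by
    intro hmem
    obtain ⟨ε, hε, h⟩ := hC.exists_add_smul_mem_of_mem_hull huC (fun d hd => by
      obtain ⟨g, hg, rfl⟩ := Finset.mem_image.1 (Finset.mem_coe.1 hd)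
      exact (Finset.mem_filter.1 hg).2) hmem
    exact hux ε hε h
  rw [hF] at hxD
  push Not at hxD
  obtain ⟨a, ha, hax⟩ := hxD
  refine ⟨a, Finset.mem_biUnion.2 ⟨D, Finset.mem_powerset.2 (Finset.filter_subset _ _), ha⟩, u,
    fun c hc => ?_, ?_⟩
  · have := (hF _ _).1 (hD c hc) a ha
    rw [dotProduct_sub] at this
    linarith
  · rw [dotProduct_sub] at hax
    linarith

theorem IsBoxIntegerPolyhedron.integrallyConvexSet {n : ℕ} {P : Set (Fin n → ℝ)}
    (hP : IsBoxIntegerPolyhedron P) (hne : P.Nonempty) :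
    IntegrallyConvexSet {z : Fin n → ℤ | castR z ∈ P} := by
  have key : ∀ u ∈ P, u ∈ convexHull ℝ (castR '' ({z : Fin n → ℤ | castR z ∈ P} ∩ intNbhd u)) := by
    intro u hu
    have hbox := hP.2 (fun i => ⌊u i⌋) (fun i => ⌈u i⌉)
    have hmem : u ∈ P ∩ {x | ∀ i, ((⌊u i⌋ : ℤ) : ℝ) ≤ x i ∧ x i ≤ ((⌈u i⌉ : ℤ) : ℝ)} :=
      ⟨hu, fun i => ⟨Int.floor_le _, Int.le_ceil _⟩⟩
    rw [hbox] at hmem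
    refine convexHull_mono (Set.image_mono ?_) hmem
    rintro z ⟨hzP, hz⟩
    refine ⟨hzP, fun i => ?_⟩
    have h₁ := Int.lt_floor_add_one (u i)
    have h₂ := Int.ceil_lt_add_one (u i)
    have h₃ := hz i
    simp only [castR] at h₃
    rw [abs_lt]
    constructor <;> linarith [h₃.1, h₃.2]
  refine ⟨?_, fun u hu => key u (convexHull_min ?_ hP.1.convex hu)⟩
  · obtain ⟨u, hu⟩ := hne
    obtain ⟨_, z, hz, rfl⟩ := convexHull_nonempty_iff.1 ⟨u, key u hu⟩
    exact ⟨z, hz.1⟩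
  · rintro _ ⟨z, hz, rfl⟩
    exact hz

/-- **Integrally convex sets and box-integer polyhedra.**
If S ⊆ ℤⁿ is integrally convex then conv(S) is a box-integer polyhedron;
conversely, if P is a nonempty box-integer polyhedron then P ∩ ℤⁿ is an
integrally convex set. -/
theorem integrallyConvexSet_iff_boxInteger (n : ℕ) :
    (∀ S : Set (Fin n → ℤ), IntegrallyConvexSet S →
      IsBoxIntegerPolyhedron (convexHull ℝ (castR '' S))) ∧
    (∀ P : Set (Fin n → ℝ), IsBoxIntegerPolyhedron P → P.Nonempty →
      IntegrallyConvexSet {z : Fin n → ℤ | castR z ∈ P}) :=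
  ⟨fun _ hS => ⟨hS.isPolyhedron_convexHull, hS.isIntegerPolytope_inter_box⟩,
    fun _ hP hne => hP.integrallyConvexSet hne⟩
end

section
/- Fenchel duality for integrally convex and separable concave functions: let f: ℤⁿ → ℤ ∪ {+∞} be an integer-valued integrally convex function with dom f ≠ ∅ and Ψ: ℤⁿ → ℤ ∪ {-∞} an integer-valued separable concave function (Ψ(x) = Σᵢ ψᵢ(xᵢ) with univariate discrete concave ψᵢ) with dom Ψ ≠ ∅. If min{f(x) - Ψ(x) : x ∈ ℤⁿ} or max{Ψ°(p) - f•(p) : p ∈ ℤⁿ} is finite, then min{f(x) - Ψ(x) : x ∈ ℤⁿ} = max{Ψ°(p) - f•(p) : p ∈ ℤⁿ}. -/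
open scoped BigOperators

/-- Dual form of the midpoint inequality of integral convexity for the function `F` on `S`, seen
through the coordinates in `s` only: an integral affine minorant of `F` on the integral
neighbourhood of the midpoint of `x` and `y` lies below `(F x + F y) / 2` at that midpoint. -/
def MidpointConvexOn {ι : Type*} (s : Finset ι) (S : Set (ι → ℤ)) (F : (ι → ℤ) → ℤ) : Prop :=
  ∀ x ∈ S, ∀ y ∈ S, ∀ (p : ι → ℤ) (α : ℤ),
    (∀ z ∈ S, (∀ i ∈ s, |x i + y i - 2 * z i| ≤ 1) → ∑ i ∈ s, p i * z i + α ≤ F z) →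
    ∑ i ∈ s, p i * (x i + y i) + 2 * α ≤ F x + F y

/-- Finite sets of lower and upper bounds that are pairwise compatible can be separated. -/
theorem exists_int_between {L U : Set ℤ} (hL : L.Finite) (hU : U.Finite)
    (h : ∀ l ∈ L, ∀ u ∈ U, l ≤ u) : ∃ q, (∀ l ∈ L, l ≤ q) ∧ ∀ u ∈ U, q ≤ u := by
  rcases L.eq_empty_or_nonempty with rfl | hne
  · obtain ⟨q, hq⟩ := hU.bddBelow
    exact ⟨q, by simp, fun u hu => hq hu⟩
  · exact ⟨sSup L, fun l hl => le_csSup hL.bddAbove hl,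
      fun u hu => csSup_le hne fun l hl => h l hl u hu⟩

/-- Adding a univariate convex function of the coordinate `j` keeps midpoint convexity with respect
to the other coordinates. -/
theorem MidpointConvexOn.add_coordinate {ι : Type*} [DecidableEq ι] {s : Finset ι} {j : ι}
    (hj : j ∉ s) {S : Set (ι → ℤ)} {F : (ι → ℤ) → ℤ} (hF : MidpointConvexOn (insert j s) S F)
    {c : ℤ} (hbox : ∀ x ∈ S, |x j - c| ≤ 1) {D : Set ℤ} (hc : c ∈ D) {φ : ℤ → ℤ}
    (hφ : c - 1 ∈ D → c + 1 ∈ D → 2 * φ c ≤ φ (c - 1) + φ (c + 1)) :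
    MidpointConvexOn s {x ∈ S | x j ∈ D} (fun x => F x + φ (x j)) := by
  rintro x ⟨hx, hxD⟩ y ⟨hy, hyD⟩ p α h
  have hxb := abs_le.1 (hbox x hx)
  have hyb := abs_le.1 (hbox y hy)
  obtain ⟨σ, τ, hloc, hmid⟩ : ∃ σ τ : ℤ,
      (∀ t, |x j + y j - 2 * t| ≤ 1 → t ∈ D ∧ φ t = σ * t + τ) ∧
      σ * (x j + y j) + 2 * τ ≤ φ (x j) + φ (y j) := by
    by_cases hxy : x j = y j
    · refine ⟨0, φ (x j), fun t ht => ?_, by rw [← hxy]; omega⟩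
      have : t = x j := by rw [abs_le] at ht; omega
      subst this; exact ⟨hxD, by ring⟩
    by_cases hadj : |x j - y j| ≤ 1
    · obtain hy1 | hy1 : y j = x j + 1 ∨ y j = x j - 1 := by
        rw [abs_le] at hadj; omega
      · refine ⟨φ (y j) - φ (x j), φ (x j) - (φ (y j) - φ (x j)) * x j, fun t ht => ?_, ?_⟩
        · obtain h1 | h1 : t = x j ∨ t = y j := by rw [abs_le] at ht; omega
          · subst h1; exact ⟨hxD, by ring⟩
          · subst h1; exact ⟨hyD, by rw [hy1]; ring⟩
        · rw [hy1]; apply le_of_eq; ring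
      · refine ⟨φ (x j) - φ (y j), φ (x j) - (φ (x j) - φ (y j)) * x j, fun t ht => ?_, ?_⟩
        · obtain h1 | h1 : t = x j ∨ t = y j := by rw [abs_le] at ht; omega
          · subst h1; exact ⟨hxD, by ring⟩
          · subst h1; exact ⟨hyD, by rw [hy1]; ring⟩
        · rw [hy1]; apply le_of_eq; ring
    · refine ⟨0, φ c, fun t ht => ?_, ?_⟩
      · have : t = c := by
          rw [abs_le] at ht hadj; omega
        subst this; exact ⟨hc, by ring⟩
      · obtain ⟨h1, h2⟩ | ⟨h1, h2⟩ :
            (x j = c - 1 ∧ y j = c + 1) ∨ (x j = c + 1 ∧ y j = c - 1) := by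
          rw [abs_le] at hadj; omega
        · have := hφ (h1 ▸ hxD) (h2 ▸ hyD)
          rw [h1, h2]; linarith
        · have := hφ (h2 ▸ hyD) (h1 ▸ hxD)
          rw [h1, h2]; linarith
  have hne : ∀ i ∈ s, i ≠ j := fun i hi h => hj (h ▸ hi)
  have hsum : ∀ w : ι → ℤ, ∑ i ∈ insert j s, Function.update p j (-σ) i * w i =
      -σ * w j + ∑ i ∈ s, p i * w i := fun w => by
    rw [Finset.sum_insert hj, Function.update_self]
    congr 1
    exact Finset.sum_congr rfl fun i hi => by rw [Function.update_of_ne (hne i hi)]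
  have key := hF x hx y hy (Function.update p j (-σ)) (α - τ) (fun z hz hnear => by
    obtain ⟨hzD, hzφ⟩ := hloc (z j) (hnear j (Finset.mem_insert_self j s))
    have := h z ⟨hz, hzD⟩ fun i hi => hnear i (Finset.mem_insert_of_mem hi)
    rw [hsum z]
    simp only at this
    linarith)
  rw [hsum fun i => x i + y i] at key
  simp only
  linarith

/-- A minimizer of the sum of a midpoint convex function on a unit box and a separable convex
function admits an integral vector that is a subgradient of the former and the negative of a
subgradient of the latter. -/
theorem exists_local_int_subgradient {ι : Type*} [DecidableEq ι] (D : ι → Set ℤ)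
    (φ : ι → ℤ → ℤ) (c : ι → ℤ) (hcD : ∀ i, c i ∈ D i)
    (hφ : ∀ i, c i - 1 ∈ D i → c i + 1 ∈ D i → 2 * φ i (c i) ≤ φ i (c i - 1) + φ i (c i + 1))
    (s : Finset ι) :
    ∀ (S : Set (ι → ℤ)) (F : (ι → ℤ) → ℤ), S.Finite → c ∈ S →
      (∀ x ∈ S, ∀ i, |x i - c i| ≤ 1) → MidpointConvexOn s S F →
      (∀ x ∈ S, (∀ i ∈ s, x i ∈ D i) →
        F c + ∑ i ∈ s, φ i (c i) ≤ F x + ∑ i ∈ s, φ i (x i)) →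
      ∃ p : ι → ℤ, (∀ x ∈ S, ∑ i ∈ s, p i * (x i - c i) ≤ F x - F c) ∧
        ∀ i ∈ s, (c i + 1 ∈ D i → 0 ≤ p i + φ i (c i + 1) - φ i (c i)) ∧
          (c i - 1 ∈ D i → 0 ≤ -p i + φ i (c i - 1) - φ i (c i)) := by
  induction s using Finset.induction_on with
  | empty =>
    intro S F _ _ _ _ hmin
    exact ⟨0, fun x hx => by simpa using hmin x hx, by simp⟩
  | insert j s hj ih =>
    intro S F hS hcS hbox hF hmin
    have hne : ∀ i ∈ s, i ≠ j := fun i hi h => hj (h ▸ hi)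
    obtain ⟨p, hp, hpφ⟩ := ih {x ∈ S | x j ∈ D j} (fun x => F x + φ j (x j))
      (hS.subset fun x hx => hx.1) ⟨hcS, hcD j⟩ (fun x hx => hbox x hx.1)
      (hF.add_coordinate hj (fun x hx => hbox x hx j) (hcD j) (hφ j)) (fun x hx hxs => by
        have := hmin x hx.1 (fun i hi => by
          rcases Finset.mem_insert.1 hi with rfl | hi
          exacts [hx.2, hxs i hi])
        rw [Finset.sum_insert hj, Finset.sum_insert hj] at this
        linarith)
    set g : (ι → ℤ) → ℤ := fun x => F x - F c - ∑ i ∈ s, p i * (x i - c i) with hg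
    have hgD : ∀ x ∈ S, x j ∈ D j → 0 ≤ g x + φ j (x j) - φ j (c j) := fun x hx hxD => by
      have := hp x ⟨hx, hxD⟩
      simp only [hg] at this ⊢
      linarith
    have hgc : ∀ x ∈ S, x j = c j → 0 ≤ g x := fun x hx hxj => by
      have := hgD x hx (hxj ▸ hcD j)
      rw [hxj] at this; linarith
    have hsumupd : ∀ (q : ℤ) (w : ι → ℤ), ∑ i ∈ insert j s, Function.update p j q i * w i =
        q * w j + ∑ i ∈ s, p i * w i := fun q w => by
      rw [Finset.sum_insert hj, Function.update_self]
      congr 1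
      exact Finset.sum_congr rfl fun i hi => by rw [Function.update_of_ne (hne i hi)]
    have hgg : ∀ x ∈ S, ∀ y ∈ S, x j = c j + 1 → y j = c j - 1 → -g y ≤ g x := by
      intro x hx y hy hxj hyj
      have := hF x hx y hy (Function.update p j 0) (F c - ∑ i ∈ s, p i * c i)
        (fun z hz hnear => by
          have h1 := hnear j (Finset.mem_insert_self j s)
          have h2 := hgc z hz (by rw [abs_le] at h1; omega)
          simp only [hg, mul_sub, Finset.sum_sub_distrib] at h2
          rw [hsumupd]
          linarith)
      rw [hsumupd 0 fun i => x i + y i] at this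
      simp only [hg, mul_sub, mul_add, Finset.sum_add_distrib, Finset.sum_sub_distrib] at this ⊢
      linarith
    obtain ⟨q, hqL, hqU⟩ := exists_int_between
      (L := (fun x => -g x) '' {x ∈ S | x j = c j - 1} ∪
        (fun t => φ j (c j) - φ j t) '' {t | t = c j + 1 ∧ t ∈ D j})
      (U := g '' {x ∈ S | x j = c j + 1} ∪
        (fun t => φ j t - φ j (c j)) '' {t | t = c j - 1 ∧ t ∈ D j})
      (((hS.subset fun x hx => hx.1).image _).union
        (((Set.finite_singleton (c j + 1)).subset fun t ht => ht.1).image _))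
      (((hS.subset fun x hx => hx.1).image _).union
        (((Set.finite_singleton (c j - 1)).subset fun t ht => ht.1).image _))
      (by
        rintro _ (⟨y, ⟨hy, hyj⟩, rfl⟩ | ⟨t, ⟨rfl, ht⟩, rfl⟩) _
          (⟨x, ⟨hx, hxj⟩, rfl⟩ | ⟨u, ⟨rfl, hu⟩, rfl⟩)
        · exact hgg x hx y hy hxj hyj
        · have := hgD y hy (hyj ▸ hu)
          rw [hyj] at this
          simp only
          linarith
        · have := hgD x hx (hxj ▸ ht)
          rw [hxj] at this
          simp only
          linarith
        · have := hφ j hu ht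
          simp only
          linarith)
    refine ⟨Function.update p j q, fun x hx => ?_, fun i hi => ?_⟩
    · rw [hsumupd q fun i => x i - c i]
      suffices q * (x j - c j) ≤ g x by simp only [hg] at this; linarith
      obtain h | h | h : x j = c j ∨ x j = c j + 1 ∨ x j = c j - 1 := by
        have := abs_le.1 (hbox x hx j); omega
      · rw [h]; simpa using hgc x hx h
      · have := hqU (g x) (Or.inl ⟨x, ⟨hx, h⟩, rfl⟩)
        rw [h]; linarith
      · have := hqL (-g x) (Or.inl ⟨x, ⟨hx, h⟩, rfl⟩)
        rw [h]; linarith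
    · rcases Finset.mem_insert.1 hi with rfl | hi
      · rw [Function.update_self]
        refine ⟨fun h => ?_, fun h => ?_⟩
        · have := hqL _ (Or.inr ⟨_, ⟨rfl, h⟩, rfl⟩)
          simp only at this
          linarith
        · have := hqU _ (Or.inr ⟨_, ⟨rfl, h⟩, rfl⟩)
          simp only at this
          linarith
      · rw [Function.update_of_ne (hne i hi)]
        exact hpφ i hi

/-- Local minimality of a discrete convex function to the right of a point is global. -/
theorem le_of_le_succ_of_convex {D : Set ℤ} (hD : D.OrdConnected) {h : ℤ → ℤ}
    (hh : ∀ k, k - 1 ∈ D → k + 1 ∈ D → 2 * h k ≤ h (k - 1) + h (k + 1)) {c : ℤ} (hc : c ∈ D)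
    (hloc : c + 1 ∈ D → h c ≤ h (c + 1)) {t : ℤ} (hct : c ≤ t) (ht : t ∈ D) : h c ≤ h t := by
  have key : ∀ t, c ≤ t → t + 1 ∈ D → h c ≤ h t ∧ h t ≤ h (t + 1) := by
    intro t hct
    induction t, hct using Int.leInduction with
    | base => exact fun h1 => ⟨le_rfl, hloc h1⟩
    | succ t hct ih =>
      intro h1
      have h2 := ih (hD.out hc h1 ⟨by omega, by omega⟩)
      have h3 := hh (t + 1) (by simpa using hD.out hc h1 ⟨hct, by omega⟩) h1
      rw [add_sub_cancel_right] at h3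
      omega
  rcases hct.eq_or_lt with rfl | hlt
  · exact le_rfl
  · have := key (t - 1) (by omega) (by simpa using ht)
    rw [sub_add_cancel] at this
    omega

/-- Local minimality of a discrete convex function is global. -/
theorem le_of_local_le_of_convex {D : Set ℤ} (hD : D.OrdConnected) {h : ℤ → ℤ}
    (hh : ∀ k, k - 1 ∈ D → k + 1 ∈ D → 2 * h k ≤ h (k - 1) + h (k + 1)) {c : ℤ} (hc : c ∈ D)
    (hr : c + 1 ∈ D → h c ≤ h (c + 1)) (hl : c - 1 ∈ D → h c ≤ h (c - 1))
    {t : ℤ} (ht : t ∈ D) : h c ≤ h t := by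
  rcases le_total c t with hct | htc
  · exact le_of_le_succ_of_convex hD hh hc hr hct ht
  · have := le_of_le_succ_of_convex (D := {k | -k ∈ D}) (h := fun k => h (-k)) (c := -c) (t := -t)
      ⟨fun a ha b hb k hk => hD.out hb ha ⟨neg_le_neg hk.2, neg_le_neg hk.1⟩⟩
      (fun k h1 h2 => by
        simp only [Set.mem_ofPred_eq] at h1 h2
        have e1 : -(k - 1) = -k + 1 := by ring
        have e2 : -(k + 1) = -k - 1 := by ring
        rw [e1] at h1
        rw [e2] at h2
        have := hh (-k) h2 h1
        simp only [e1, e2]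
        linarith)
      (by simpa using hc)
      (fun h1 => by
        have e : -(-c + 1) = c - 1 := by ring
        simp only [Set.mem_ofPred_eq, e] at h1 ⊢
        simpa using hl h1)
      (by omega) (by simpa using ht)
    simpa using this

/-- An affine minorant of a midpoint convex function on a unit box that touches it at the centre of
the box is a global minorant. -/
theorem MidpointConvexOn.subgradient_of_local {ι : Type*} [Fintype ι] {S : Set (ι → ℤ)}
    {F : (ι → ℤ) → ℤ} (hF : MidpointConvexOn Finset.univ S F) {c p : ι → ℤ} (hc : c ∈ S)
    (hloc : ∀ x ∈ S, (∀ i, |x i - c i| ≤ 1) → ∑ i, p i * (x i - c i) ≤ F x - F c)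
    {x : ι → ℤ} (hx : x ∈ S) : ∑ i, p i * (x i - c i) ≤ F x - F c := by
  have key : ∀ K : ℤ, 1 ≤ K → ∀ x ∈ S, (∀ i, |x i - c i| ≤ K) →
      ∑ i, p i * (x i - c i) ≤ F x - F c := by
    intro K hK
    induction K, hK using Int.leInduction with
    | base => exact hloc
    | succ K hK ih =>
      intro x hx hxK
      have := hF c hc x hx p (F c - ∑ i, p i * c i) (fun z hz hnear => by
        have := ih z hz fun i => by
          have h1 := abs_le.1 (hnear i (Finset.mem_univ i))
          have h2 := abs_le.1 (hxK i)
          rw [abs_le]; omega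
        simp only [mul_sub, Finset.sum_sub_distrib] at this
        linarith)
      simp only [mul_sub, mul_add, Finset.sum_add_distrib, Finset.sum_sub_distrib] at this ⊢
      linarith
  refine key (∑ i, |x i - c i| + 1) ?_ x hx fun i => ?_
  · have := Finset.sum_nonneg fun i (_ : i ∈ Finset.univ) => abs_nonneg (x i - c i)
    omega
  · have := Finset.single_le_sum (f := fun i => |x i - c i|) (fun i _ => abs_nonneg _)
      (Finset.mem_univ i)
    omega

/-- A minimizer of the sum of a midpoint convex function and a separable convex function admits an
integral vector that is a subgradient of the former and the negative of a subgradient of the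
latter. -/
theorem exists_int_subgradient {ι : Type*} [Fintype ι] {S : Set (ι → ℤ)} {F : (ι → ℤ) → ℤ}
    (hF : MidpointConvexOn Finset.univ S F) {D : ι → Set ℤ} (hD : ∀ i, (D i).OrdConnected)
    {φ : ι → ℤ → ℤ}
    (hφ : ∀ i k, k - 1 ∈ D i → k + 1 ∈ D i → 2 * φ i k ≤ φ i (k - 1) + φ i (k + 1))
    {c : ι → ℤ} (hc : c ∈ S) (hcD : ∀ i, c i ∈ D i)
    (hmin : ∀ x ∈ S, (∀ i, x i ∈ D i) → F c + ∑ i, φ i (c i) ≤ F x + ∑ i, φ i (x i)) :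
    ∃ p : ι → ℤ, (∀ x ∈ S, ∑ i, p i * (x i - c i) ≤ F x - F c) ∧
      ∀ i, ∀ t ∈ D i, 0 ≤ p i * (t - c i) + φ i t - φ i (c i) := by
  classical
  set B : Set (ι → ℤ) := {x ∈ S | ∀ i, |x i - c i| ≤ 1} with hB
  have hBfin : B.Finite := (Set.finite_Icc (c - 1) (c + 1)).subset fun x hx =>
    ⟨fun i => by have := abs_le.1 (hx.2 i); simp; omega,
      fun i => by have := abs_le.1 (hx.2 i); simp; omega⟩
  obtain ⟨p, hp, hpφ⟩ := exists_local_int_subgradient D φ c hcD (fun i => hφ i (c i))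
    Finset.univ B F hBfin ⟨hc, by simp⟩ (fun x hx => hx.2)
    (fun x hx y hy p α h => hF x hx.1 y hy.1 p α fun z hz hnear => h z ⟨hz, fun i => by
      have h1 := abs_le.1 (hnear i (Finset.mem_univ i))
      have h2 := abs_le.1 (hx.2 i)
      have h3 := abs_le.1 (hy.2 i)
      rw [abs_le]; omega⟩ hnear)
    (fun x hx hxD => hmin x hx.1 fun i => hxD i (Finset.mem_univ i))
  refine ⟨p, fun x hx => hF.subgradient_of_local hc (fun x hx hb => hp x ⟨hx, hb⟩) hx,
    fun i t ht => ?_⟩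
  obtain ⟨h1, h2⟩ := hpφ i (Finset.mem_univ i)
  have := le_of_local_le_of_convex (hD i) (h := fun t => p i * t + φ i t)
    (fun k hk hk' => by have := hφ i k hk hk'; linarith) (hcD i)
    (fun h => by have := h1 h; linarith)
    (fun h => by have := h2 h; linarith) ht
  linarith

/-- A nonempty interval of integers is the zero set of a nonnegative discrete convex function. -/
theorem exists_convex_penalty {D : Set ℤ} (hD : D.OrdConnected) (hne : D.Nonempty) :
    ∃ k : ℤ → ℤ, (∀ t, 2 * k t ≤ k (t - 1) + k (t + 1)) ∧ (∀ t ∈ D, k t = 0) ∧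
      (∀ t, 0 ≤ k t) ∧ ∀ t, t ∉ D → 1 ≤ k t := by
  set N : ℤ → ℕ := fun t => sInf ((fun d => (t - d).natAbs) '' D) with hN
  have hle : ∀ t, ∀ d ∈ D, N t ≤ (t - d).natAbs := fun t d hd => Nat.sInf_le ⟨d, hd, rfl⟩
  have hatt : ∀ t, ∃ d ∈ D, (t - d).natAbs = N t := fun t => Nat.sInf_mem (hne.image _)
  refine ⟨fun t => N t, fun t => ?_, fun t ht => ?_, fun t => by positivity, fun t ht => ?_⟩
  · obtain ⟨a, ha, ha'⟩ := hatt (t - 1)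
    obtain ⟨b, hb, hb'⟩ := hatt (t + 1)
    have hm : ∀ m, |a + b - 2 * m| ≤ 1 → m ∈ D := fun m hm => by
      rw [abs_le] at hm
      rcases lt_trichotomy a b with h | rfl | h
      · exact hD.out ha hb ⟨by omega, by omega⟩
      · have : m = a := by omega
        exact this ▸ ha
      · exact hD.out hb ha ⟨by omega, by omega⟩
    have h1 := hle t ((a + b) / 2) (hm _ (by rw [abs_le]; omega))
    have h2 := hle t ((a + b + 1) / 2) (hm _ (by rw [abs_le]; omega))
    simp only
    omega
  · have := hle t t ht
    simp at this ⊢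
    omega
  · obtain ⟨d, hd, h⟩ := hatt t
    have : t ≠ d := fun h => ht (h ▸ hd)
    simp only
    omega

/-- The midpoint inequality of an integer-valued integrally convex function implies its dual form
on the effective domain. -/
theorem IntegrallyConvexFn.midpointConvexOn {n : ℕ} {f : (Fin n → ℤ) → EReal}
    (hf : IntegrallyConvexFn f) {F : (Fin n → ℤ) → ℤ}
    (hF : ∀ x, f x ≠ ⊤ → f x = ((F x : ℝ) : EReal)) :
    MidpointConvexOn Finset.univ {x | f x ≠ ⊤} F := by
  intro x hx y hy p α h
  by_cases hxy : ∃ i, 2 ≤ |x i - y i|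
  · have hle := hf.2 x y hxy
    set u : Fin n → ℝ := fun i => ((x i + y i : ℤ) : ℝ) / 2 with hu
    have hbound : (((∑ i, (p i : ℝ) * u i + α : ℝ)) : EReal) ≤ localConvexExt f u := by
      refine le_sInf ?_
      rintro v ⟨t, lam, hnear, hnonneg, hone, hbary, rfl⟩
      have hrw : ∑ i, (p i : ℝ) * u i + α = ∑ z ∈ t, lam z * (∑ i, (p i : ℝ) * z i + α) := by
        simp only [mul_add, Finset.sum_add_distrib, ← Finset.sum_mul, hone, one_mul,
          Finset.mul_sum]
        congr 1
        rw [Finset.sum_comm]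
        refine Finset.sum_congr rfl fun i _ => ?_
        rw [← hbary i, Finset.mul_sum]
        exact Finset.sum_congr rfl fun z _ => by ring
      have hcoe : ∀ (t : Finset (Fin n → ℤ)) (g : (Fin n → ℤ) → ℝ),
          ((∑ z ∈ t, g z : ℝ) : EReal) = ∑ z ∈ t, (g z : EReal) := fun t g =>
        map_sum (⟨⟨Real.toEReal, EReal.coe_zero⟩, EReal.coe_add⟩ : ℝ →+ EReal) g t
      rw [hrw, hcoe]
      refine Finset.sum_le_sum fun z hz => ?_
      by_cases hfz : f z = ⊤
      · rcases (hnonneg z hz).eq_or_lt with h0 | h0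
        · simp [← h0]
        · rw [hfz, EReal.coe_mul_top_of_pos h0]
          exact le_top
      · rw [hF z hfz, ← EReal.coe_mul, EReal.coe_le_coe_iff]
        refine mul_le_mul_of_nonneg_left ?_ (hnonneg z hz)
        have := h z hfz fun i _ => by
          have h1 : |u i - (z i : ℝ)| < 1 := hnear z hz i
          rw [hu, abs_lt] at h1
          have h2 : x i + y i - 2 * z i < 2 := by
            rify; push_cast at h1; linarith
          have h3 : -2 < x i + y i - 2 * z i := by
            rify; push_cast at h1; linarith
          rw [abs_le]; omega
        exact_mod_cast this
    have htot := hbound.trans hle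
    rw [hF x hx, hF y hy, ← EReal.coe_add,
      show (2 : EReal) = ((2 : ℝ) : EReal) from rfl, ← EReal.coe_div,
      EReal.coe_le_coe_iff] at htot
    have hmul : ∑ i, (p i : ℝ) * u i = (∑ i, (p i : ℝ) * ((x i : ℝ) + y i)) / 2 := by
      rw [Finset.sum_div]
      exact Finset.sum_congr rfl fun i _ => by simp only [hu]; push_cast; ring
    rw [hmul] at htot
    rify
    linarith
  · push Not at hxy
    have hx' := h x hx fun i _ => by
      have := abs_lt.1 (hxy i)
      rw [abs_le]; omega
    have hy' := h y hy fun i _ => by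
      have := abs_lt.1 (hxy i)
      rw [abs_le]; omega
    simp only [mul_add, Finset.sum_add_distrib]
    linarith

/-- Weak Fenchel duality. -/
theorem conjugate_sub_conjugate_le {X : Type*} {f P : X → EReal}
    (hf : ∀ x, f x = ⊤ ∨ ∃ m : ℤ, f x = ((m : ℝ) : EReal))
    (hP : ∀ x, P x = ⊥ ∨ ∃ m : ℤ, P x = ((m : ℝ) : EReal)) (l : X → ℤ) (x : X) :
    (⨅ x, (((l x : ℝ) : EReal) - P x)) - (⨆ x, (((l x : ℝ) : EReal) - f x)) ≤ f x - P x := by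
  refine (EReal.sub_le_sub (iInf_le _ x) (le_iSup (fun x => ((l x : ℝ) : EReal) - f x) x)).trans ?_
  rcases hP x with h | ⟨m, h⟩
  · rw [h, EReal.sub_bot (x := f x) (by rcases hf x with h | ⟨m, h⟩ <;> simp [h])]
    exact le_top
  · rcases hf x with h' | ⟨k, h'⟩
    · rw [h', h, EReal.top_sub_coe]
      exact le_top
    · rw [h, h']
      simp only [← EReal.coe_sub]
      rw [EReal.coe_le_coe_iff]
      linarith

/-- Integral bounds on both conjugates bound the dual objective from below. -/
theorem le_conjugate_sub_conjugate {X : Type*} {f P : X → EReal}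
    (hf : ∀ x, f x = ⊤ ∨ ∃ m : ℤ, f x = ((m : ℝ) : EReal))
    (hP : ∀ x, P x = ⊥ ∨ ∃ m : ℤ, P x = ((m : ℝ) : EReal)) {l : X → ℤ} {u v : ℤ}
    (hu : ∀ x (m : ℤ), P x = ((m : ℝ) : EReal) → u ≤ l x - m)
    (hv : ∀ x (m : ℤ), f x = ((m : ℝ) : EReal) → l x - m ≤ v) :
    (((u - v : ℤ) : ℝ) : EReal) ≤
      (⨅ x, (((l x : ℝ) : EReal) - P x)) - (⨆ x, (((l x : ℝ) : EReal) - f x)) := by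
  rw [Int.cast_sub, EReal.coe_sub]
  refine EReal.sub_le_sub (le_iInf fun x => ?_) (iSup_le fun x => ?_)
  · rcases hP x with h | ⟨m, h⟩
    · rw [h, EReal.coe_sub_bot]
      exact le_top
    · rw [h, ← EReal.coe_sub, EReal.coe_le_coe_iff]
      exact_mod_cast hu x m h
  · rcases hf x with h | ⟨m, h⟩
    · rw [h, EReal.sub_top]
      exact bot_le
    · rw [h, ← EReal.coe_sub, EReal.coe_le_coe_iff]
      exact_mod_cast hv x m h

/-- A dual objective value other than `⊥` yields integral bounds on both conjugates. -/
theorem exists_bounds_of_conjugate_sub_conjugate_ne_bot {X : Type*} {f P : X → EReal} {l : X → ℤ}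
    (h : (⨅ x, (((l x : ℝ) : EReal) - P x)) - (⨆ x, (((l x : ℝ) : EReal) - f x)) ≠ ⊥) :
    ∃ u v : ℤ, (∀ x (m : ℤ), P x = ((m : ℝ) : EReal) → u ≤ l x - m) ∧
      ∀ x (m : ℤ), f x = ((m : ℝ) : EReal) → l x - m ≤ v := by
  have h1 : (⨅ x, (((l x : ℝ) : EReal) - P x)) ≠ ⊥ := fun h1 => h (by rw [h1, EReal.bot_sub])
  have h2 : (⨆ x, (((l x : ℝ) : EReal) - f x)) ≠ ⊤ := fun h2 => h (by rw [h2, EReal.sub_top])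
  obtain ⟨r, -, hr⟩ := EReal.lt_iff_exists_real_btwn.1 (bot_lt_iff_ne_bot.2 h1)
  obtain ⟨q, hq, -⟩ := EReal.lt_iff_exists_real_btwn.1 (lt_top_iff_ne_top.2 h2)
  refine ⟨⌊r⌋, ⌈q⌉, fun x m hx => ?_, fun x m hx => ?_⟩
  · have := hr.le.trans (iInf_le _ x)
    rw [hx, ← EReal.coe_sub, EReal.coe_le_coe_iff] at this
    have := (Int.floor_le r).trans this
    exact_mod_cast this
  · have := (le_iSup (fun x => ((l x : ℝ) : EReal) - f x) x).trans hq.le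
    rw [hx, ← EReal.coe_sub, EReal.coe_le_coe_iff] at this
    have := this.trans (Int.le_ceil q)
    exact_mod_cast this

/-- An integer-valued function bounded below on a nonempty set attains its minimum there. -/
theorem exists_minimizer_of_int_bdd {X : Type*} {A : Set X} (hA : A.Nonempty) {H : X → ℤ} {b : ℤ}
    (hb : ∀ x ∈ A, b ≤ H x) : ∃ c ∈ A, ∀ x ∈ A, H c ≤ H x := by
  obtain ⟨a, ha⟩ := hA
  obtain ⟨_, ⟨c, hc, rfl⟩, hmin⟩ := Int.exists_least_of_bdd (P := fun z => ∃ x ∈ A, H x = z)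
    ⟨b, by rintro _ ⟨x, hx, rfl⟩; exact hb x hx⟩ ⟨H a, a, ha, rfl⟩
  exact ⟨c, hc, fun x hx => hmin _ ⟨x, hx, rfl⟩⟩

/-- If the effective domains are disjoint, then finite dual values are unbounded. -/
theorem exists_large_dual_of_infeasible {ι : Type*} [Fintype ι] {S : Set (ι → ℤ)}
    {F : (ι → ℤ) → ℤ} (hF : MidpointConvexOn Finset.univ S F) (hS : S.Nonempty)
    {D : ι → Set ℤ} (hD : ∀ i, (D i).OrdConnected) (hDne : ∀ i, (D i).Nonempty)
    (hdisj : ∀ x ∈ S, ¬ ∀ i, x i ∈ D i) {p₀ : ι → ℤ} {v : ℤ}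
    (hv : ∀ x ∈ S, ∑ i, p₀ i * x i - F x ≤ v) (M : ℤ) (hM : 0 ≤ M) :
    ∃ (p : ι → ℤ) (w : ℤ), (∀ x ∈ S, ∑ i, p i * x i - F x ≤ w) ∧
      ∀ x : ι → ℤ, (∀ i, x i ∈ D i) → ∑ i, p₀ i * x i + M - v + w ≤ ∑ i, p i * x i := by
  choose k hk hk0 hknn hk1 using fun i => exists_convex_penalty (hD i) (hDne i)
  have hbd : ∀ x ∈ S, M - v ≤ F x + ∑ i, (M * k i (x i) - p₀ i * x i) := by
    intro x hx
    obtain ⟨j, hj⟩ := not_forall.1 (hdisj x hx)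
    have h1 : 1 ≤ ∑ i, k i (x i) := (hk1 j _ hj).trans
      (Finset.single_le_sum (f := fun i => k i (x i)) (fun i _ => hknn i _) (Finset.mem_univ j))
    have h2 := hv x hx
    rw [Finset.sum_sub_distrib, ← Finset.mul_sum]
    nlinarith
  obtain ⟨c, hc, hmin⟩ := exists_minimizer_of_int_bdd hS hbd
  obtain ⟨p, hp, hpφ⟩ := exists_int_subgradient hF (D := fun _ => Set.univ)
    (fun _ => Set.ordConnected_univ) (φ := fun i t => M * k i t - p₀ i * t)
    (fun i t _ _ => by nlinarith [hk i t]) hc (fun _ => Set.mem_univ _) (fun x hx _ => hmin x hx)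
  refine ⟨p, ∑ i, p i * c i - F c, fun x hx => ?_, fun x hx => ?_⟩
  · have := hp x hx
    simp only [mul_sub, Finset.sum_sub_distrib] at this
    linarith
  · have h1 := Finset.sum_nonneg fun i (_ : i ∈ Finset.univ) => hpφ i (x i) (Set.mem_univ _)
    have h2 := hbd c hc
    simp only [hk0 _ _ (hx _), mul_sub, Finset.sum_sub_distrib, Finset.sum_add_distrib, mul_zero,
      Finset.sum_const_zero] at h1 h2
    linarith

/-- **Fenchel duality for a pair of an integer-valued integrally convex
function and an integer-valued separable concave function** (main result,
Theorem 1.1).  min{f(x) − Ψ(x)} = max{Ψ°(p) − f•(p)}, provided one of the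
two sides is finite; moreover both optima are attained. -/
theorem fenchel_duality_integrally_convex_separable_concave (n : ℕ)
    (f : (Fin n → ℤ) → EReal)
    (hfZ : ∀ z, f z = ⊤ ∨ ∃ m : ℤ, f z = ((m : ℝ) : EReal))
    (hf : IntegrallyConvexFn f)
    (ψ : Fin n → ℤ → EReal)
    (hψZ : ∀ i k, ψ i k = ⊥ ∨ ∃ m : ℤ, ψ i k = ((m : ℝ) : EReal))
    (hψint : ∀ i (k l m : ℤ), k ≤ l → l ≤ m → ψ i k ≠ ⊥ → ψ i m ≠ ⊥ → ψ i l ≠ ⊥)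
    (hψconc : ∀ i (k : ℤ), ψ i (k - 1) + ψ i (k + 1) ≤ (2 : EReal) * ψ i k)
    (hdom : ∃ x : Fin n → ℤ, (∑ i, ψ i (x i)) ≠ ⊥)
    (hfin :
      ((⨅ x : Fin n → ℤ, (f x - ∑ i, ψ i (x i))) ≠ ⊤ ∧
        (⨅ x : Fin n → ℤ, (f x - ∑ i, ψ i (x i))) ≠ ⊥) ∨
      ((⨆ p : Fin n → ℤ,
          ((⨅ x : Fin n → ℤ, ((((∑ i, p i * x i : ℤ) : ℝ) : EReal) - ∑ i, ψ i (x i))) -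
           (⨆ x : Fin n → ℤ, ((((∑ i, p i * x i : ℤ) : ℝ) : EReal) - f x)))) ≠ ⊤ ∧
       (⨆ p : Fin n → ℤ,
          ((⨅ x : Fin n → ℤ, ((((∑ i, p i * x i : ℤ) : ℝ) : EReal) - ∑ i, ψ i (x i))) -
           (⨆ x : Fin n → ℤ, ((((∑ i, p i * x i : ℤ) : ℝ) : EReal) - f x)))) ≠ ⊥)) :
    (⨅ x : Fin n → ℤ, (f x - ∑ i, ψ i (x i))) =
      (⨆ p : Fin n → ℤ,
        ((⨅ x : Fin n → ℤ, ((((∑ i, p i * x i : ℤ) : ℝ) : EReal) - ∑ i, ψ i (x i))) -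
         (⨆ x : Fin n → ℤ, ((((∑ i, p i * x i : ℤ) : ℝ) : EReal) - f x)))) ∧
    (∃ xs : Fin n → ℤ,
      f xs - (∑ i, ψ i (xs i)) = ⨅ x : Fin n → ℤ, (f x - ∑ i, ψ i (x i))) ∧
    (∃ ps : Fin n → ℤ,
      ((⨅ x : Fin n → ℤ, ((((∑ i, ps i * x i : ℤ) : ℝ) : EReal) - ∑ i, ψ i (x i))) -
       (⨆ x : Fin n → ℤ, ((((∑ i, ps i * x i : ℤ) : ℝ) : EReal) - f x))) =
      (⨆ p : Fin n → ℤ,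
        ((⨅ x : Fin n → ℤ, ((((∑ i, p i * x i : ℤ) : ℝ) : EReal) - ∑ i, ψ i (x i))) -
         (⨆ x : Fin n → ℤ, ((((∑ i, p i * x i : ℤ) : ℝ) : EReal) - f x))))) := by
  choose! F hF using fun x (hx : f x ≠ ⊤) => (hfZ x).resolve_left hx
  choose! φ' hφ' using fun i k (h : ψ i k ≠ ⊥) => (hψZ i k).resolve_left h
  set φ : Fin n → ℤ → ℤ := fun i k => -φ' i k with hφdef
  have hψφ : ∀ i k, ψ i k ≠ ⊥ → ψ i k = (((-φ i k : ℤ) : ℝ) : EReal) := fun i k h => by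
    simpa [hφdef] using hφ' i k h
  set D : Fin n → Set ℤ := fun i => {k | ψ i k ≠ ⊥} with hDdef
  set S : Set (Fin n → ℤ) := {x | f x ≠ ⊤} with hSdef
  have hMid : MidpointConvexOn Finset.univ S F := hf.midpointConvexOn hF
  have hD : ∀ i, (D i).OrdConnected := fun i =>
    ⟨fun a ha b hb k hk => hψint i a k b hk.1 hk.2 ha hb⟩
  have hconv : ∀ i k, k - 1 ∈ D i → k + 1 ∈ D i →
      2 * φ i k ≤ φ i (k - 1) + φ i (k + 1) := fun i k h1 h2 => by
    have h := hψconc i k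
    have hk : ψ i k ≠ ⊥ := (hD i).out h1 h2 ⟨by omega, by omega⟩
    rw [hψφ i _ h1, hψφ i _ h2, hψφ i k hk, show (2 : EReal) = ((2 : ℝ) : EReal) from rfl,
      ← EReal.coe_add, ← EReal.coe_mul, EReal.coe_le_coe_iff] at h
    have h' : -φ i (k - 1) + -φ i (k + 1) ≤ 2 * -φ i k := by exact_mod_cast h
    linarith
  set P : (Fin n → ℤ) → EReal := fun x => ∑ i, ψ i (x i) with hPdef
  have hPfin : ∀ x, (∀ i, x i ∈ D i) → P x = (((-∑ i, φ i (x i) : ℤ) : ℝ) : EReal) := by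
    intro x hx
    have : ((∑ i, ((-φ i (x i) : ℤ) : ℝ) : ℝ) : EReal) =
        ∑ i, (((-φ i (x i) : ℤ) : ℝ) : EReal) :=
      map_sum (⟨⟨Real.toEReal, EReal.coe_zero⟩, EReal.coe_add⟩ : ℝ →+ EReal) _ _
    rw [← Finset.sum_neg_distrib, Int.cast_sum, this]
    exact Finset.sum_congr rfl fun i _ => hψφ i _ (hx i)
  have hPbot : ∀ x, (¬ ∀ i, x i ∈ D i) → P x = ⊥ := by
    intro x hx
    obtain ⟨j, hj⟩ := not_forall.1 hx
    have hj : ψ j (x j) = ⊥ := not_not.1 hj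
    simp only [hPdef]
    rw [← Finset.add_sum_erase _ _ (Finset.mem_univ j), hj, EReal.bot_add]
  have hPZ : ∀ x, P x = ⊥ ∨ ∃ m : ℤ, P x = ((m : ℝ) : EReal) := fun x => by
    by_cases hx : ∀ i, x i ∈ D i
    exacts [Or.inr ⟨_, hPfin x hx⟩, Or.inl (hPbot x hx)]
  have hPval : ∀ x (m : ℤ), P x = ((m : ℝ) : EReal) →
      (∀ i, x i ∈ D i) ∧ m = -∑ i, φ i (x i) := fun x m h => by
    by_cases hx : ∀ i, x i ∈ D i
    · rw [hPfin x hx, EReal.coe_eq_coe_iff] at h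
      exact ⟨hx, by exact_mod_cast h.symm⟩
    · rw [hPbot x hx] at h
      exact absurd h.symm (EReal.coe_ne_bot _)
  have hfval : ∀ x (m : ℤ), f x = ((m : ℝ) : EReal) → x ∈ S ∧ m = F x := fun x m h => by
    have hx : f x ≠ ⊤ := h ▸ EReal.coe_ne_top _
    rw [hF x hx, EReal.coe_eq_coe_iff] at h
    exact ⟨hx, by exact_mod_cast h.symm⟩
  have hval : ∀ x ∈ S, (∀ i, x i ∈ D i) →
      f x - P x = (((F x + ∑ i, φ i (x i) : ℤ) : ℝ) : EReal) := fun x hx hxD => by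
    rw [hF x hx, hPfin x hxD, ← EReal.coe_sub]
    congr 1
    push_cast
    ring
  set Q : (Fin n → ℤ) → EReal := fun p =>
    (⨅ x : Fin n → ℤ, ((((∑ i, p i * x i : ℤ) : ℝ) : EReal) - P x)) -
      (⨆ x : Fin n → ℤ, ((((∑ i, p i * x i : ℤ) : ℝ) : EReal) - f x)) with hQdef
  have hweak : ∀ p x, Q p ≤ f x - P x := fun p x =>
    conjugate_sub_conjugate_le hfZ hPZ (fun x => ∑ i, p i * x i) x
  have hlow : ∀ (p : Fin n → ℤ) (u v : ℤ),
      (∀ x : Fin n → ℤ, (∀ i, x i ∈ D i) → u ≤ ∑ i, p i * x i + ∑ i, φ i (x i)) →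
      (∀ x ∈ S, ∑ i, p i * x i - F x ≤ v) → (((u - v : ℤ) : ℝ) : EReal) ≤ Q p :=
    fun p u v hu hv => le_conjugate_sub_conjugate hfZ hPZ (l := fun x => ∑ i, p i * x i)
      (fun x m h => by
        obtain ⟨hx, rfl⟩ := hPval x m h
        have := hu x hx
        linarith)
      (fun x m h => by
        obtain ⟨hx, rfl⟩ := hfval x m h
        exact hv x hx)
  obtain ⟨d, hd⟩ := hdom
  have hdD : ∀ i, d i ∈ D i := by
    by_contra h
    exact hd (hPbot d h)
  have hdual : (⨆ p, Q p) ≤ ⨅ x, (f x - P x) := iSup_le fun p => le_iInf fun x => hweak p x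
  change (((⨅ x, (f x - P x)) ≠ ⊤ ∧ (⨅ x, (f x - P x)) ≠ ⊥) ∨
    ((⨆ p, Q p) ≠ ⊤ ∧ (⨆ p, Q p) ≠ ⊥)) at hfin
  change (⨅ x, (f x - P x)) = (⨆ p, Q p) ∧ (∃ xs, f xs - P xs = ⨅ x, (f x - P x)) ∧
    ∃ ps, Q ps = ⨆ p, Q p
  have hfeas : ∃ x ∈ S, ∀ i, x i ∈ D i := by
    by_contra hno
    push Not at hno
    have hdisj : ∀ x ∈ S, ¬ ∀ i, x i ∈ D i := fun x hx h =>
      (hno x hx).elim fun i hi => hi (h i)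
    rcases hfin with ⟨h, -⟩ | ⟨htop, hbot⟩
    · refine h (iInf_eq_top.2 fun x => ?_)
      by_cases hx : x ∈ S
      · rw [hF x hx, hPbot x (hdisj x hx), EReal.coe_sub_bot]
      · rw [show f x = ⊤ from not_not.1 hx]
        rcases hPZ x with h | ⟨m, h⟩
        · rw [h, EReal.top_sub_bot]
        · rw [h, EReal.top_sub_coe]
    · obtain ⟨p₀, hp₀⟩ : ∃ p, Q p ≠ ⊥ := by
        by_contra h
        push Not at h
        exact hbot (iSup_eq_bot.2 h)
      obtain ⟨u, v, hu, hv⟩ := exists_bounds_of_conjugate_sub_conjugate_ne_bot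
        (f := f) (P := P) (l := fun x => ∑ i, p₀ i * x i) hp₀
      refine htop (EReal.eq_top_iff_forall_lt _ |>.2 fun r => ?_)
      obtain ⟨p, w, hpw, hpD⟩ := exists_large_dual_of_infeasible hMid hf.1 hD
        (fun i => ⟨d i, hdD i⟩) hdisj (fun x hx => hv x _ (hF x hx))
        (max 0 (⌈r⌉ + 1 + v - u)) (le_max_left _ _)
      refine lt_of_lt_of_le ?_ ((hlow p (⌈r⌉ + 1 + w) w (fun x hx => ?_) hpw).trans
        (le_iSup Q p))
      · rw [EReal.coe_lt_coe_iff]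
        have := Int.le_ceil r
        push_cast
        linarith
      · have h1 := hpD x hx
        have h2 := hu x _ (hPfin x hx)
        have h3 := le_max_right 0 (⌈r⌉ + 1 + v - u)
        linarith
  have hprimal : (⨅ x, (f x - P x)) ≠ ⊥ := by
    rcases hfin with ⟨-, h⟩ | ⟨-, h⟩
    · exact h
    · exact fun h' => h (le_bot_iff.1 (h' ▸ hdual))
  obtain ⟨r, -, hr⟩ := EReal.lt_iff_exists_real_btwn.1 (bot_lt_iff_ne_bot.2 hprimal)
  obtain ⟨c, ⟨hc, hcD⟩, hmin⟩ := exists_minimizer_of_int_bdd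
    (A := {x | x ∈ S ∧ ∀ i, x i ∈ D i}) (H := fun x => F x + ∑ i, φ i (x i)) (b := ⌊r⌋) hfeas
    (fun x hx => by
      have := hr.le.trans (iInf_le _ x)
      rw [hval x hx.1 hx.2, EReal.coe_le_coe_iff] at this
      exact_mod_cast (Int.floor_le r).trans this)
  obtain ⟨p, hp, hpφ⟩ := exists_int_subgradient hMid hD hconv hc hcD
    fun x hx hxD => hmin x ⟨hx, hxD⟩
  have hge : f c - P c ≤ Q p := by
    have := hlow p (∑ i, p i * c i + ∑ i, φ i (c i)) (∑ i, p i * c i - F c)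
      (fun x hx => by
        have := Finset.sum_nonneg fun i (_ : i ∈ Finset.univ) => hpφ i (x i) (hx i)
        simp only [mul_sub, Finset.sum_sub_distrib, Finset.sum_add_distrib] at this
        linarith)
      (fun x hx => by
        have := hp x hx
        simp only [mul_sub, Finset.sum_sub_distrib] at this
        linarith)
    rw [hval c hc hcD]
    refine le_trans (le_of_eq ?_) this
    congr 2
    ring
  have h1 : (⨅ x, (f x - P x)) ≤ f c - P c := iInf_le _ c
  have h2 : Q p ≤ ⨆ p, Q p := le_iSup Q p
  exact ⟨le_antisymm (h1.trans (hge.trans h2)) hdual,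
    ⟨c, le_antisymm (hge.trans (h2.trans hdual)) h1⟩,
    ⟨p, le_antisymm h2 (hdual.trans (h1.trans hge))⟩⟩
end
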